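/- arXiv:0911.0610 — 2 statements merged into one kernel-verified Lean document; each statement's English description precedes it below -/
import Mathlib

section
/- (Multiparameter stochastic ergodic theorem, discrete case.) Let (S, 𝓑, μ) be a standard Borel space with a σ-finite measure μ, let {φ_t}_{t∈ℤ^d} be a nonsingular ℤ^d-action on (S,μ), and for t ∈ ℤ^d let w(t,·) be a measurable version of the Radon–Nikodym derivative of the measure A ↦ μ(φ_t(A)) with respect to μ. Let f₀ ∈ L¹(S,μ) and set f(t,s) := w(t,s) f₀(φ_t(s)). Then there exists f̃ ∈ L¹(S,μ) such that the averages A_T f := (2T)^{-d} Σ_{t ∈ (−T,T]^d ∩ ℤ^d} f(t,·) converge to f̃ locally in measure as T → ∞, and f̃ is invariant: for every t ∈ ℤ^d, w(t,s) f̃(φ_t(s)) = f̃(s) for μ-a.e. s. -/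
open MeasureTheory Filter

/-!
The action has two isometric representations linked by the density `w`: translation weighted by `w`
on `L¹`, and translation weighted by `√w` on `L²`. Let `q` be the projection of a strictly positive
`L²` function to the fixed vectors of the second one. For a fixed vector `b`, the cutoff of `|b|` to
`{q = 0}` is fixed and orthogonal to `q`, hence to the positive function; thus `b` vanishes where
`q` does. It suffices to treat a function `F ∈ L¹` supported on `{q ≠ 0}` or on `{q = 0}`.

* On `{q ≠ 0}`, multiplication by `q` is an operator `L² → L¹` which intertwines the two
  representations and whose range has `F` in its closure, so that the mean ergodic theorem in `L²`
  gives convergence of the averages of `F` in `L¹`.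
* On `{q = 0}`, the functions `√|A_T F|` are bounded in `L²`, asymptotically invariant by the Følner
  property, and orthogonal to the fixed vectors. Hence they converge weakly to `0`, and testing
  against the indicator of a set of finite measure gives convergence in measure there.
-/

section Foelner

open scoped Finset Pointwise symmDiff Topology

variable {G ι : Type*} [AddGroup G] [DecidableEq G] {l : Filter ι}

theorem card_symmDiff_of_card_eq {α : Type*} [DecidableEq α] {s t : Finset α} (h : #s = #t) :
    (#(s ∆ t) : ℝ) = 2 * (#t - #(s ∩ t)) := by
  have hs := Finset.card_sdiff_add_card_inter s t
  have ht := Finset.card_sdiff_add_card_inter t s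
  rw [Finset.inter_comm] at ht
  rw [symmDiff_def, Finset.sup_eq_union,
    Finset.card_union_of_disjoint disjoint_sdiff_sdiff, eq_comm, ← ht]
  have : (#(s \ t) : ℝ) = #(t \ s) := by norm_cast; lia
  push_cast
  linarith

theorem card_vadd_symmDiff_div {A : Finset G} (hA : A.Nonempty) (u : G) :
    (#((u +ᵥ A) ∆ A) / #A : ℝ) = 2 * (1 - #((u +ᵥ A) ∩ A) / #A) := by
  have : (#A : ℝ) ≠ 0 := by simpa using hA.ne_empty
  rw [card_symmDiff_of_card_eq (Finset.card_vadd_finset u A)]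
  field_simp

theorem isAddFoelner_count_iff_tendsto_card_symmDiff [MeasurableSpace G]
    [MeasurableSingletonClass G] {A : ι → Finset G} :
    IsAddFoelner G Measure.count l (fun i => (A i : Set G)) ↔
      (∀ᶠ i in l, (A i).Nonempty) ∧
        ∀ u : G, Tendsto (fun i => (#((u +ᵥ A i) ∆ A i) / #(A i) : ℝ)) l (𝓝 0) := by
  have hcount (u : G) (i : ι) :
      Measure.count ((u +ᵥ (A i : Set G)) ∆ (A i : Set G)) / Measure.count (A i : Set G) =
        (#((u +ᵥ A i) ∆ A i) / #(A i) : ENNReal) := by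
    rw [← Finset.coe_vadd_finset, ← Finset.coe_symmDiff, Measure.count_apply_finset,
      Measure.count_apply_finset]
  have hfinite (u : G) (i : ι) : (#((u +ᵥ A i) ∆ A i) / #(A i) : ENNReal) ≠ ⊤ := by
    rcases (A i).eq_empty_or_nonempty with h | h
    · simp [h]
    · exact ENNReal.div_ne_top (by simp) (by simpa using h.ne_empty)
  have htendsto (u : G) := ENNReal.tendsto_toReal_iff (fi := l) (hfinite u) ENNReal.zero_ne_top
  simp only [ENNReal.toReal_div, ENNReal.toReal_natCast, ENNReal.toReal_zero] at htendsto
  simp only [isAddFoelner_iff, hcount, htendsto]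
  simp [Finset.nonempty_iff_ne_empty, Finset.measurableSet]

theorem isAddFoelner_count_iff_tendsto_card_inter [MeasurableSpace G]
    [MeasurableSingletonClass G] {A : ι → Finset G} :
    IsAddFoelner G Measure.count l (fun i => (A i : Set G)) ↔
      ∀ u : G, Tendsto (fun i => (#((u +ᵥ A i) ∩ A i) / #(A i) : ℝ)) l (𝓝 1) := by
  rw [isAddFoelner_count_iff_tendsto_card_symmDiff]
  constructor
  · rintro ⟨hne, h⟩ u
    have hlim : Tendsto (fun i => 1 - (#((u +ᵥ A i) ∆ A i) / #(A i) : ℝ) / 2) l (𝓝 1) := by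
      simpa using ((h u).div_const 2).const_sub 1
    refine hlim.congr' ?_
    filter_upwards [hne] with i hi
    rw [card_vadd_symmDiff_div hi]
    ring
  · intro h
    have hne : ∀ᶠ i in l, (A i).Nonempty := by
      filter_upwards [(h 0).eventually_ne one_ne_zero] with i hi
      by_contra hempty
      simp [Finset.not_nonempty_iff_eq_empty.1 hempty] at hi
    refine ⟨hne, fun u => ?_⟩
    have hlim : Tendsto (fun i => 2 * (1 - (#((u +ᵥ A i) ∩ A i) / #(A i) : ℝ))) l (𝓝 0) := by
      simpa using ((h u).const_sub 1).const_mul 2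
    refine hlim.congr' ?_
    filter_upwards [hne] with i hi using (card_vadd_symmDiff_div hi u).symm

theorem isAddFoelner_count_piFinset {κ : Type*} [Fintype κ] [DecidableEq κ] {G : κ → Type*}
    [∀ k, AddGroup (G k)] [∀ k, MeasurableSpace (G k)] [∀ k, MeasurableSingletonClass (G k)]
    {A : ∀ k, ι → Finset (G k)}
    (hA : ∀ k, IsAddFoelner (G k) Measure.count l (fun i => (A k i : Set (G k)))) :
    IsAddFoelner (∀ k, G k) Measure.count l
      (fun i => (Fintype.piFinset fun k => A k i : Set (∀ k, G k))) := by
  classical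
  simp only [isAddFoelner_count_iff_tendsto_card_inter] at hA
  refine isAddFoelner_count_iff_tendsto_card_inter.2 fun u => ?_
  have hprod := tendsto_finsetProd Finset.univ fun k _ => hA k (u k)
  rw [Finset.prod_const_one] at hprod
  refine hprod.congr fun i => ?_
  have hshift : u +ᵥ Fintype.piFinset (fun k => A k i) =
      Fintype.piFinset fun k => u k +ᵥ A k i :=
    (Fintype.piFinset_vadd_finset u fun k => A k i).symm
  rw [hshift, ← Fintype.piFinset_inter, Fintype.card_piFinset, Fintype.card_piFinset]
  push_cast
  exact Finset.prod_div_distrib _ _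

theorem card_Ioc_neg_natCast (T : ℕ) : (#(Finset.Ioc (-T : ℤ) T) : ℝ) = 2 * T := by
  rw [Int.card_Ioc]
  norm_cast
  lia

theorem card_vadd_Ioc_inter_Ioc (u : ℤ) {T : ℕ} (hT : u.natAbs ≤ 2 * T) :
    (#((u +ᵥ Finset.Ioc (-T : ℤ) T) ∩ Finset.Ioc (-T : ℤ) T) : ℝ) = 2 * T - u.natAbs := by
  have hshift : u +ᵥ Finset.Ioc (-T : ℤ) T = Finset.Ioc (u + -T) (u + T) :=
    Finset.image_add_left_Ioc (-T : ℤ) T u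
  rw [hshift, Finset.Ioc_inter_Ioc, Int.card_Ioc, eq_sub_iff_add_eq]
  norm_cast
  lia

theorem isAddFoelner_count_int_Ioc :
    IsAddFoelner ℤ Measure.count atTop (fun T : ℕ => (Finset.Ioc (-T : ℤ) T : Set ℤ)) := by
  refine isAddFoelner_count_iff_tendsto_card_inter.2 fun u => ?_
  have hlim : Tendsto (fun T : ℕ => 1 - (u.natAbs : ℝ) / (2 * T)) atTop (𝓝 1) := by
    have : Tendsto (fun T : ℕ => (u.natAbs : ℝ) / (2 * T)) atTop (𝓝 0) :=
      tendsto_const_nhds.div_atTop (tendsto_natCast_atTop_atTop.const_mul_atTop two_pos)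
    simpa using this.const_sub 1
  refine hlim.congr' ?_
  filter_upwards [eventually_ge_atTop u.natAbs, eventually_gt_atTop 0] with T hu hT
  rw [card_vadd_Ioc_inter_Ioc u (by lia), card_Ioc_neg_natCast]
  field_simp

end Foelner

section BoundedOperators

open scoped Topology

variable {𝕜 E F ι : Type*} [RCLike 𝕜] [NormedAddCommGroup E] [NormedSpace 𝕜 E]
  [NormedAddCommGroup F] [NormedSpace 𝕜 F] {l : Filter ι} {T : ι → E →L[𝕜] F} {C : ℝ}

theorem tendsto_zero_of_mem_topologicalClosure_span (hT : ∀ i, ‖T i‖ ≤ C) {D : Set E}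
    (hD : ∀ x ∈ D, Tendsto (fun i => T i x) l (𝓝 0)) {x : E}
    (hx : x ∈ (Submodule.span 𝕜 D).topologicalClosure) : Tendsto (fun i => T i x) l (𝓝 0) := by
  have hbounded : ∃ C, ∀ i, ‖T i‖ ≤ C := ⟨C, hT⟩
  have hequicont : Equicontinuous fun i => (T i : E → F) :=
    ((NormedSpace.equicontinuous_TFAE T).out 5 1).1 hbounded
  have hclosed : IsClosed {x | Tendsto (fun i => T i x) l (𝓝 0)} :=
    hequicont.isClosed_setOfPred_tendsto (f := 0) continuous_zero
  refine closure_minimal (fun y (hy : y ∈ Submodule.span 𝕜 D) => ?_) hclosed hx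
  induction hy using Submodule.span_induction with
  | mem y hy => exact hD y hy
  | zero => simpa using tendsto_const_nhds
  | add y z _ _ hy hz => simpa using hy.add hz
  | smul c y _ hy => simpa using hy.const_smul c

theorem exists_tendsto_of_mem_closure [CompleteSpace F] [l.NeBot] (hT : ∀ i, ‖T i‖ ≤ C)
    {D : Set E} (hD : ∀ x ∈ D, ∃ y, Tendsto (fun i => T i x) l (𝓝 y)) {x : E}
    (hx : x ∈ closure D) : ∃ y, Tendsto (fun i => T i x) l (𝓝 y) := by
  refine cauchy_map_iff_exists_tendsto.1 (Metric.cauchy_iff.2 ⟨inferInstance, fun ε hε => ?_⟩)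
  have hC : 0 ≤ C := let ⟨i⟩ := l.nonempty_of_neBot; (norm_nonneg _).trans (hT i)
  obtain ⟨y, hyD, hxy⟩ := Metric.mem_closure_iff.1 hx (ε / (4 * (C + 1))) (by positivity)
  obtain ⟨z, hz⟩ := hD y hyD
  have hclose (i : ι) : dist (T i x) (T i y) ≤ ε / 4 := calc
    dist (T i x) (T i y) = ‖T i (x - y)‖ := by rw [dist_eq_norm, map_sub]
    _ ≤ (C + 1) * (ε / (4 * (C + 1))) := by
      refine (T i).le_of_opNorm_le_of_le ((hT i).trans (by linarith)) ?_
      exact (dist_eq_norm x y ▸ hxy).le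
    _ = ε / 4 := by field_simp
  refine ⟨Metric.ball z (ε / 2), mem_map.2 ?_, fun a ha b hb => ?_⟩
  · filter_upwards [hz (Metric.ball_mem_nhds z (show 0 < ε / 4 by positivity))] with i hi
    have hi : dist (T i y) z < ε / 4 := hi
    exact (dist_triangle _ (T i y) z).trans_lt (by linarith [hclose i])
  · rw [Metric.mem_ball] at ha hb
    linarith [dist_triangle_right a b z]

end BoundedOperators

section IsometricRepresentation

open scoped Finset Pointwise symmDiff Topology

variable {𝕜 E G : Type*} [RCLike 𝕜] [NormedAddCommGroup E] [NormedSpace 𝕜 E]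

section AddMonoid

variable [AddMonoid G]

theorem map_add_apply (V : AddChar G (E →ₗᵢ[𝕜] E)) (u v : G) (x : E) :
    V (u + v) x = V u (V v x) := by
  rw [AddChar.map_add_eq_mul, LinearIsometry.coe_mul, Function.comp_apply]

/-- The vectors fixed by an isometric representation `V` of an additive monoid, the latter being
encoded as an additive character with values in the monoid of linear isometries. -/
def fixedSubmodule (V : AddChar G (E →ₗᵢ[𝕜] E)) : Submodule 𝕜 E where
  carrier := {x | ∀ u, V u x = x}
  add_mem' hx hy u := by rw [map_add, hx u, hy u]
  zero_mem' u := map_zero (V u)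
  smul_mem' c x hx u := by rw [map_smul, hx u]

theorem mem_fixedSubmodule {V : AddChar G (E →ₗᵢ[𝕜] E)} {x : E} :
    x ∈ fixedSubmodule V ↔ ∀ u, V u x = x :=
  Iff.rfl

theorem isClosed_fixedSubmodule (V : AddChar G (E →ₗᵢ[𝕜] E)) :
    IsClosed (fixedSubmodule V : Set E) := by
  have : (fixedSubmodule V : Set E) = ⋂ u, {x | V u x = x} := by ext; simp [mem_fixedSubmodule]
  rw [this]
  exact isClosed_iInter fun u => isClosed_eq (V u).continuous continuous_id

/-- The coboundaries `V u x - x` of an isometric representation `V`. -/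
def coboundaries (V : AddChar G (E →ₗᵢ[𝕜] E)) : Set E :=
  {z | ∃ u x, V u x - x = z}

/-- The average of an isometric representation over a finite set; it is `0` for the empty set. -/
noncomputable def orbitAverage (V : AddChar G (E →ₗᵢ[𝕜] E)) (A : Finset G) : E →L[𝕜] E :=
  (#A : 𝕜)⁻¹ • ∑ t ∈ A, (V t).toContinuousLinearMap

theorem orbitAverage_apply (V : AddChar G (E →ₗᵢ[𝕜] E)) (A : Finset G) (x : E) :
    orbitAverage V A x = (#A : 𝕜)⁻¹ • ∑ t ∈ A, V t x := by
  simp [orbitAverage]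

theorem norm_orbitAverage_le (V : AddChar G (E →ₗᵢ[𝕜] E)) (A : Finset G) :
    ‖orbitAverage V A‖ ≤ 1 := by
  refine ContinuousLinearMap.opNorm_le_bound _ zero_le_one fun x => ?_
  have hsum : ‖∑ t ∈ A, V t x‖ ≤ #A * ‖x‖ :=
    (norm_sum_le _ _).trans_eq (by simp)
  rw [orbitAverage_apply, norm_smul, norm_inv, RCLike.norm_natCast]
  calc (#A : ℝ)⁻¹ * ‖∑ t ∈ A, V t x‖ ≤ (#A : ℝ)⁻¹ * (#A * ‖x‖) := by gcongr
    _ = (#A : ℝ)⁻¹ * #A * ‖x‖ := (mul_assoc _ _ _).symm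
    _ ≤ 1 * ‖x‖ := by gcongr; exact inv_mul_le_one

theorem orbitAverage_apply_of_mem_fixedSubmodule {V : AddChar G (E →ₗᵢ[𝕜] E)} {A : Finset G}
    (hA : A.Nonempty) {x : E} (hx : x ∈ fixedSubmodule V) : orbitAverage V A x = x := by
  have : (#A : 𝕜) ≠ 0 := by simpa using hA.ne_empty
  simp only [orbitAverage_apply, mem_fixedSubmodule.1 hx, Finset.sum_const,
    ← Nat.cast_smul_eq_nsmul 𝕜, inv_smul_smul₀ this]

end AddMonoid

section AddCommGroup

variable [AddCommGroup G] (V : AddChar G (E →ₗᵢ[𝕜] E))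

theorem apply_orbitAverage (A : Finset G) (u : G) (x : E) :
    V u (orbitAverage V A x) = orbitAverage V A (V u x) := by
  simp only [orbitAverage_apply, map_smul, map_sum, ← map_add_apply, add_comm u]

theorem norm_orbitAverage_coboundary_le [DecidableEq G] (A : Finset G) (u : G) (x : E) :
    ‖orbitAverage V A (V u x - x)‖ ≤ #((u +ᵥ A) ∆ A) / #A * ‖x‖ := by
  have hshift : ∑ t ∈ A, V t (V u x) = ∑ t ∈ u +ᵥ A, V t x := by
    rw [← Finset.image_vadd, Finset.sum_image (AddAction.injective u).injOn]
    simp only [vadd_eq_add, add_comm u, map_add_apply]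
  have hbound (B : Finset G) : ‖∑ t ∈ B, V t x‖ ≤ #B * ‖x‖ :=
    (norm_sum_le _ _).trans_eq (by simp)
  have hsum : ‖∑ t ∈ A, V t (V u x - x)‖ ≤ #((u +ᵥ A) ∆ A) * ‖x‖ := by
    simp only [map_sub, Finset.sum_sub_distrib, hshift]
    rw [← Finset.sum_sdiff_sub_sum_sdiff]
    refine (norm_sub_le_of_le (hbound _) (hbound _)).trans_eq ?_
    rw [symmDiff_def, Finset.sup_eq_union, Finset.card_union_of_disjoint disjoint_sdiff_sdiff]
    push_cast
    ring
  rw [orbitAverage_apply, norm_smul, norm_inv, RCLike.norm_natCast, inv_mul_eq_div,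
    div_mul_eq_mul_div]
  gcongr

variable [MeasurableSpace G] [MeasurableSingletonClass G] {ι : Type*} {l : Filter ι}
  {A : ι → Finset G}

theorem tendsto_orbitAverage_coboundary
    (hA : IsAddFoelner G Measure.count l (fun i => (A i : Set G))) (u : G) (x : E) :
    Tendsto (fun i => orbitAverage V (A i) (V u x - x)) l (𝓝 0) := by
  classical
  refine squeeze_zero_norm (fun i => norm_orbitAverage_coboundary_le V (A i) u x) ?_
  simpa using ((isAddFoelner_count_iff_tendsto_card_symmDiff.1 hA).2 u).mul_const ‖x‖

theorem mem_fixedSubmodule_of_tendsto_orbitAverage [l.NeBot] {V : AddChar G (E →ₗᵢ[𝕜] E)}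
    (hA : IsAddFoelner G Measure.count l (fun i => (A i : Set G))) {x y : E}
    (hxy : Tendsto (fun i => orbitAverage V (A i) x) l (𝓝 y)) : y ∈ fixedSubmodule V := by
  intro u
  have hlim : Tendsto (fun i => V u (orbitAverage V (A i) x) - orbitAverage V (A i) x) l
      (𝓝 (V u y - y)) := (((V u).continuous.tendsto y).comp hxy).sub hxy
  simp only [apply_orbitAverage, ← map_sub] at hlim
  exact sub_eq_zero.1 (tendsto_nhds_unique hlim (tendsto_orbitAverage_coboundary V hA u x))

end AddCommGroup

section Hilbert

variable {H : Type*} [NormedAddCommGroup H] [InnerProductSpace 𝕜 H]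

theorem inner_coboundary_left [AddGroup G] (V : AddChar G (H →ₗᵢ[𝕜] H)) (u : G) (x y : H) :
    inner 𝕜 (V u x - x) y = inner 𝕜 x (V (-u) y - y) := by
  have hinv : V (-u) (V u x) = x := by
    rw [← map_add_apply, neg_add_cancel, AddChar.map_zero_eq_one, LinearIsometry.coe_one, id]
  rw [inner_sub_left, inner_sub_right, ← (V (-u)).inner_map_map (V u x), hinv]

theorem orthogonal_span_coboundaries [AddGroup G] (V : AddChar G (H →ₗᵢ[𝕜] H)) :
    (Submodule.span 𝕜 (coboundaries V))ᗮ = fixedSubmodule V := by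
  ext y
  rw [Submodule.mem_orthogonal]
  constructor
  · intro h u
    refine sub_eq_zero.1 (inner_self_eq_zero (𝕜 := 𝕜).1 ?_)
    have := h _ (Submodule.subset_span ⟨-u, V u y - y, rfl⟩)
    rwa [inner_coboundary_left, neg_neg] at this
  · intro hy z hz
    induction hz using Submodule.span_induction with
    | mem z hz =>
      obtain ⟨u, x, rfl⟩ := hz
      rw [inner_coboundary_left, mem_fixedSubmodule.1 hy, sub_self, inner_zero_right]
    | zero => exact inner_zero_left y
    | add a b _ _ ha hb => rw [inner_add_left, ha, hb, add_zero]
    | smul c a _ ha => rw [inner_smul_left, ha, mul_zero]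

variable [CompleteSpace H]

theorem orthogonal_fixedSubmodule [AddGroup G] (V : AddChar G (H →ₗᵢ[𝕜] H)) :
    (fixedSubmodule V)ᗮ = (Submodule.span 𝕜 (coboundaries V)).topologicalClosure := by
  rw [← orthogonal_span_coboundaries, Submodule.orthogonal_orthogonal_eq_closure]

instance [AddMonoid G] (V : AddChar G (H →ₗᵢ[𝕜] H)) :
    (fixedSubmodule V).HasOrthogonalProjection :=
  have := (isClosed_fixedSubmodule V).completeSpace_coe
  inferInstance

variable {ι : Type*} {l : Filter ι}

theorem tendsto_orbitAverage_starProjection [AddCommGroup G] [MeasurableSpace G]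
    [MeasurableSingletonClass G] (V : AddChar G (H →ₗᵢ[𝕜] H)) {A : ι → Finset G}
    (hA : IsAddFoelner G Measure.count l (fun i => (A i : Set G))) (x : H) :
    Tendsto (fun i => orbitAverage V (A i) x) l (𝓝 ((fixedSubmodule V).starProjection x)) := by
  classical
  set y := (fixedSubmodule V).starProjection x
  have hsub : x - y ∈ (Submodule.span 𝕜 (coboundaries V)).topologicalClosure :=
    orthogonal_fixedSubmodule V ▸ (fixedSubmodule V).sub_starProjection_mem_orthogonal x
  have hzero : Tendsto (fun i => orbitAverage V (A i) (x - y)) l (𝓝 0) := by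
    refine tendsto_zero_of_mem_topologicalClosure_span (fun i => norm_orbitAverage_le V (A i)) ?_
      hsub
    rintro _ ⟨u, z, rfl⟩
    exact tendsto_orbitAverage_coboundary V hA u z
  refine (zero_add y ▸ hzero.add_const y).congr' ?_
  filter_upwards [(isAddFoelner_count_iff_tendsto_card_symmDiff.1 hA).1] with i hi
  have hy : orbitAverage V (A i) y = y := orbitAverage_apply_of_mem_fixedSubmodule hi
    ((fixedSubmodule V).starProjection_apply_mem x)
  rw [map_sub, hy, sub_add_cancel]

theorem tendsto_inner_zero_of_asymptotically_fixed [AddGroup G] (V : AddChar G (H →ₗᵢ[𝕜] H))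
    {g : ι → H} {C : ℝ} (hbound : ∀ i, ‖g i‖ ≤ C) (horth : ∀ i, g i ∈ (fixedSubmodule V)ᗮ)
    (hfixed : ∀ u, Tendsto (fun i => V u (g i) - g i) l (𝓝 0)) (x : H) :
    Tendsto (fun i => inner 𝕜 (g i) x) l (𝓝 0) := by
  set y := (fixedSubmodule V).starProjection x
  have hsub : x - y ∈ (Submodule.span 𝕜 (coboundaries V)).topologicalClosure :=
    orthogonal_fixedSubmodule V ▸ (fixedSubmodule V).sub_starProjection_mem_orthogonal x
  have hzero : Tendsto (fun i => innerSL 𝕜 (g i) (x - y)) l (𝓝 0) := by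
    refine tendsto_zero_of_mem_topologicalClosure_span (C := C) (fun i => ?_) ?_ hsub
    · rw [innerSL_apply_norm]
      exact hbound i
    · rintro _ ⟨u, z, rfl⟩
      have hmove (i : ι) : innerSL 𝕜 (g i) (V u z - z) = inner 𝕜 (V (-u) (g i) - g i) z := by
        rw [inner_coboundary_left, neg_neg, innerSL_apply_apply]
      simp only [hmove]
      simpa using (hfixed (-u)).inner (tendsto_const_nhds (x := z))
  refine hzero.congr fun i => ?_
  have hy : inner 𝕜 (g i) y = 0 :=
    Submodule.inner_left_of_mem_orthogonal ((fixedSubmodule V).starProjection_apply_mem x)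
      (horth i)
  rw [innerSL_apply_apply, inner_sub_right, hy, sub_zero]

end Hilbert

end IsometricRepresentation

section NonsingularAction

open scoped ENNReal NNReal

/-- An additive action by nonsingular transformations: every translation maps `μ` to a measure
absolutely continuous with respect to `μ`. For the action of a group the two measures are then
equivalent. -/
class IsNonsingularVAdd (G : Type*) {S : Type*} [VAdd G S] [MeasurableSpace S]
    (μ : Measure S) : Prop where
  map_vadd_absolutelyContinuous (t : G) : μ.map (t +ᵥ ·) ≪ μ

/-- The density of `A ↦ μ (t +ᵥ A)` with respect to `μ`. The former measure is encoded as the image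
of `μ` under the translation by `-t`, and the density is made finite everywhere. -/
noncomputable def jacobian {G S : Type*} [Neg G] [VAdd G S] [MeasurableSpace S] (μ : Measure S)
    (t : G) (s : S) : ℝ≥0 :=
  ((μ.map (-t +ᵥ ·)).rnDeriv μ s).toNNReal

variable {G S : Type*} [AddGroup G] [MeasurableSpace S] [AddAction G S] {μ : Measure S}

@[fun_prop]
theorem measurable_jacobian (t : G) : Measurable (jacobian μ t) :=
  (Measure.measurable_rnDeriv _ _).ennreal_toNNReal

variable [MeasurableConstVAdd G S] [IsNonsingularVAdd G μ]

theorem quasiMeasurePreserving_vadd (t : G) :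
    Measure.QuasiMeasurePreserving (t +ᵥ · : S → S) μ μ :=
  ⟨measurable_const_vadd t, IsNonsingularVAdd.map_vadd_absolutelyContinuous t⟩

theorem absolutelyContinuous_map_vadd (t : G) : μ ≪ μ.map (t +ᵥ ·) := by
  have h : (μ.map (-t +ᵥ ·)).map (t +ᵥ ·) ≪ μ.map (t +ᵥ ·) :=
    (IsNonsingularVAdd.map_vadd_absolutelyContinuous (-t)).map (measurable_const_vadd t)
  rwa [Measure.map_map (measurable_const_vadd t) (measurable_const_vadd (-t)),
    show (t +ᵥ · : S → S) ∘ (-t +ᵥ ·) = id from funext (vadd_neg_vadd t), Measure.map_id] at h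

variable [SigmaFinite μ]

theorem withDensity_jacobian (t : G) :
    μ.withDensity (fun s => (jacobian μ t s : ℝ≥0∞)) = μ.map (-t +ᵥ ·) := by
  have : SigmaFinite (μ.map (-t +ᵥ ·)) := (MeasurableEquiv.vadd (-t)).sigmaFinite_map
  rw [← Measure.withDensity_rnDeriv_eq (μ.map (-t +ᵥ ·)) μ
    (IsNonsingularVAdd.map_vadd_absolutelyContinuous (-t))]
  refine withDensity_congr_ae ?_
  filter_upwards [Measure.rnDeriv_ne_top (μ.map (-t +ᵥ ·)) μ] with s hs using
    ENNReal.coe_toNNReal hs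

theorem lintegral_jacobian_mul (t : G) (F : S → ℝ≥0∞) :
    ∫⁻ s, jacobian μ t s * F (t +ᵥ s) ∂μ = ∫⁻ s, F s ∂μ := calc
  ∫⁻ s, jacobian μ t s * F (t +ᵥ s) ∂μ = ∫⁻ s, F (t +ᵥ s) ∂μ.map (-t +ᵥ ·) := by
    rw [← withDensity_jacobian, lintegral_withDensity_eq_lintegral_mul_non_measurable _
      (measurable_jacobian t).coe_nnreal_ennreal (Eventually.of_forall fun _ => ENNReal.coe_lt_top)]
    rfl
  _ = ∫⁻ s, F (t +ᵥ (-t +ᵥ s)) ∂μ :=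
    lintegral_map_equiv (fun s => F (t +ᵥ s)) (MeasurableEquiv.vadd (-t))
  _ = ∫⁻ s, F s ∂μ := by simp only [vadd_neg_vadd]

theorem jacobian_ae_eq_of_lintegral_mul {t : G} {g : S → ℝ≥0} (hg : Measurable g)
    (h : ∀ F : S → ℝ≥0∞, Measurable F → ∫⁻ s, g s * F (t +ᵥ s) ∂μ = ∫⁻ s, F s ∂μ) :
    jacobian μ t =ᵐ[μ] g := by
  have hdensity : μ.withDensity (fun s => (jacobian μ t s : ℝ≥0∞)) =
      μ.withDensity fun s => (g s : ℝ≥0∞) := by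
    refine Measure.ext_of_lintegral _ fun F hF => ?_
    have hrewrite : F = fun s => F (-t +ᵥ (t +ᵥ s)) := by simp only [neg_vadd_vadd]
    rw [lintegral_withDensity_eq_lintegral_mul _ (by fun_prop) hF,
      lintegral_withDensity_eq_lintegral_mul _ (by fun_prop) hF, hrewrite]
    exact (lintegral_jacobian_mul t fun s => F (-t +ᵥ s)).trans
      (h _ (hF.comp (measurable_const_vadd (-t)))).symm
  rw [withDensity_eq_iff_of_sigmaFinite (by fun_prop) (by fun_prop)] at hdensity
  filter_upwards [hdensity] with s hs using ENNReal.coe_injective hs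

theorem jacobian_zero : jacobian μ (0 : G) =ᵐ[μ] fun _ => 1 :=
  jacobian_ae_eq_of_lintegral_mul measurable_const (by simp)

theorem jacobian_add (u v : G) :
    jacobian μ (v + u) =ᵐ[μ] fun s => jacobian μ u s * jacobian μ v (u +ᵥ s) := by
  refine jacobian_ae_eq_of_lintegral_mul
    ((measurable_jacobian u).mul ((measurable_jacobian v).comp (measurable_const_vadd u)))
    fun F _ => ?_
  rw [← lintegral_jacobian_mul v F, ← lintegral_jacobian_mul u fun s => jacobian μ v s * F (v +ᵥ s)]
  simp only [ENNReal.coe_mul, add_vadd, mul_assoc]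

end NonsingularAction

section Koopman

open scoped ENNReal NNReal

variable {G S E : Type*} [MeasurableSpace S] [NormedAddCommGroup E] [NormedSpace ℝ E]
  {μ : Measure S} [SigmaFinite μ] {p : ℝ≥0∞}

section AddGroup

variable [AddGroup G] [AddAction G S] [MeasurableConstVAdd G S] [IsNonsingularVAdd G μ]

theorem eLpNorm_jacobian_rpow_smul (hp : p ≠ 0) (t : G) (f : S → E) :
    eLpNorm (fun s => jacobian μ t s ^ p.toReal⁻¹ • f (t +ᵥ s)) p μ = eLpNorm f p μ := by
  rcases eq_or_ne p ∞ with rfl | hp_top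
  · simp only [ENNReal.toReal_top, inv_zero, NNReal.rpow_zero, one_smul, eLpNorm_exponent_top]
    have hmap : eLpNormEssSup (fun s => f (t +ᵥ s)) μ = eLpNormEssSup f (μ.map (t +ᵥ ·)) :=
      ((MeasurableEquiv.vadd t).measurableEmbedding.eLpNormEssSup_map_measure).symm
    rw [hmap]
    exact le_antisymm
      (eLpNormEssSup_mono_measure f (IsNonsingularVAdd.map_vadd_absolutelyContinuous t))
      (eLpNormEssSup_mono_measure f (absolutelyContinuous_map_vadd t))
  · have hp_pos : p.toReal ≠ 0 := (ENNReal.toReal_pos hp hp_top).ne'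
    rw [eLpNorm_eq_lintegral_rpow_enorm_toReal hp hp_top,
      eLpNorm_eq_lintegral_rpow_enorm_toReal hp hp_top,
      ← lintegral_jacobian_mul t fun s => ‖f s‖ₑ ^ p.toReal]
    congr 1
    refine lintegral_congr fun s => ?_
    rw [NNReal.smul_def, enorm_smul, NNReal.enorm_eq,
      ENNReal.mul_rpow_of_nonneg _ _ ENNReal.toReal_nonneg,
      ← ENNReal.coe_rpow_of_nonneg _ ENNReal.toReal_nonneg, NNReal.rpow_inv_rpow hp_pos]

theorem memLp_jacobian_rpow_smul (hp : p ≠ 0) (t : G) {f : S → E} (hf : MemLp f p μ) :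
    MemLp (fun s => jacobian μ t s ^ p.toReal⁻¹ • f (t +ᵥ s)) p μ :=
  ⟨((measurable_jacobian t).pow_const _).aestronglyMeasurable.smul
    (hf.1.comp_quasiMeasurePreserving (quasiMeasurePreserving_vadd t)),
    (eLpNorm_jacobian_rpow_smul hp t f).trans_lt hf.2⟩

variable (μ E p) in
/-- The weighted translation `f ↦ (jacobian μ t) ^ (1 / p) • f (t +ᵥ ·)` of `Lp E p μ`. For `p = ∞`
the exponent is `0`, so that the weight is `1`. -/
noncomputable def koopmanIsometry [hp : Fact (1 ≤ p)] (t : G) : Lp E p μ →ₗᵢ[ℝ] Lp E p μ :=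
  have hmem (f : Lp E p μ) :=
    memLp_jacobian_rpow_smul (zero_lt_one.trans_le hp.out).ne' t (Lp.memLp f)
  { toFun f := (hmem f).toLp
    map_add' f g := by
      rw [← MemLp.toLp_add, MemLp.toLp_eq_toLp_iff]
      filter_upwards [(quasiMeasurePreserving_vadd t).ae (Lp.coeFn_add f g)] with s hs
      rw [hs, Pi.add_apply, Pi.add_apply, smul_add]
    map_smul' c f := by
      rw [RingHom.id_apply, ← MemLp.toLp_const_smul, MemLp.toLp_eq_toLp_iff]
      filter_upwards [(quasiMeasurePreserving_vadd t).ae (Lp.coeFn_smul c f)] with s hs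
      rw [hs, Pi.smul_apply, Pi.smul_apply, smul_comm]
    norm_map' f := by
      change ‖(hmem f).toLp‖ = ‖f‖
      rw [Lp.norm_toLp, eLpNorm_jacobian_rpow_smul (zero_lt_one.trans_le hp.out).ne', Lp.norm_def] }

theorem coeFn_koopmanIsometry [Fact (1 ≤ p)] (t : G) (f : Lp E p μ) :
    koopmanIsometry E μ p t f =ᵐ[μ] fun s => jacobian μ t s ^ p.toReal⁻¹ • f (t +ᵥ s) :=
  (memLp_jacobian_rpow_smul (zero_lt_one.trans_le Fact.out).ne' t (Lp.memLp f)).coeFn_toLp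

end AddGroup

variable [AddCommGroup G] [AddAction G S] [MeasurableConstVAdd G S] [IsNonsingularVAdd G μ]

variable (G E μ p) in
/-- The isometric representation on `Lp E p μ` of a commutative group of nonsingular
transformations. -/
noncomputable def koopman [Fact (1 ≤ p)] : AddChar G (Lp E p μ →ₗᵢ[ℝ] Lp E p μ) where
  toFun := koopmanIsometry E μ p
  map_zero_eq_one' := by
    ext1 f
    refine Lp.ext ?_
    filter_upwards [coeFn_koopmanIsometry (0 : G) f, jacobian_zero (G := G) (μ := μ)] with s hf hj
    rw [hf, hj, NNReal.one_rpow, one_smul, zero_vadd, LinearIsometry.coe_one, id]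
  map_add_eq_mul' u v := by
    ext1 f
    refine Lp.ext ?_
    filter_upwards [coeFn_koopmanIsometry (u + v) f, jacobian_add (μ := μ) u v,
      coeFn_koopmanIsometry u (koopmanIsometry E μ p v f),
      (quasiMeasurePreserving_vadd u).ae (coeFn_koopmanIsometry v f)] with s huv hj hu hv
    rw [LinearIsometry.coe_mul, Function.comp_apply, huv, hu, hv, add_comm, hj, NNReal.mul_rpow,
      mul_smul, add_vadd]

theorem coeFn_koopman_one (t : G) (f : Lp ℝ 1 μ) :
    koopman G ℝ μ 1 t f =ᵐ[μ] fun s => jacobian μ t s * f (t +ᵥ s) := by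
  filter_upwards [coeFn_koopmanIsometry t f] with s hs
  rw [koopman, AddChar.coe_mk, hs]
  simp [NNReal.smul_def]

theorem coeFn_koopman_two (t : G) (f : Lp ℝ 2 μ) :
    koopman G ℝ μ 2 t f =ᵐ[μ] fun s => √(jacobian μ t s) * f (t +ᵥ s) := by
  filter_upwards [coeFn_koopmanIsometry t f] with s hs
  rw [koopman, AddChar.coe_mk, hs, Real.sqrt_eq_rpow]
  simp [NNReal.smul_def]

end Koopman

section SqrtAbs

variable {S : Type*} [MeasurableSpace S] {μ : Measure S}

theorem sq_sqrt_abs_sub_sqrt_abs_le (a b : ℝ) : (√|a| - √|b|) ^ 2 ≤ |a - b| := calc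
  (√|a| - √|b|) ^ 2 = |(√|a| - √|b|)| * |(√|a| - √|b|)| := by rw [abs_mul_abs_self, sq]
  _ ≤ |(√|a| + √|b|)| * |(√|a| - √|b|)| := by
    refine mul_le_mul_of_nonneg_right ?_ (abs_nonneg _)
    rw [abs_of_nonneg (add_nonneg (Real.sqrt_nonneg |a|) (Real.sqrt_nonneg |b|)), abs_sub_le_iff]
    constructor <;> linarith [Real.sqrt_nonneg |a|, Real.sqrt_nonneg |b|]
  _ = |(√|a| ^ 2 - √|b| ^ 2)| := by rw [← abs_mul, sq_sub_sq]
  _ = |(|a| - |b|)| := by rw [Real.sq_sqrt (abs_nonneg a), Real.sq_sqrt (abs_nonneg b)]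
  _ ≤ |a - b| := abs_abs_sub_abs_le_abs_sub a b

theorem memLp_two_sqrt_abs {f : S → ℝ} (hf : Integrable f μ) : MemLp (fun s => √|f s|) 2 μ := by
  have hmeas : AEStronglyMeasurable (fun s => √|f s|) μ :=
    (Real.continuous_sqrt.comp continuous_abs).comp_aestronglyMeasurable hf.1
  rw [memLp_two_iff_integrable_sq hmeas]
  simpa only [Real.sq_sqrt (abs_nonneg _)] using hf.abs

/-- The map `F ↦ √|F|` from `L¹` to `L²`. -/
noncomputable def sqrtAbs (F : Lp ℝ 1 μ) : Lp ℝ 2 μ :=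
  (memLp_two_sqrt_abs (L1.integrable_coeFn F)).toLp

theorem coeFn_sqrtAbs (F : Lp ℝ 1 μ) : sqrtAbs F =ᵐ[μ] fun s => √|F s| :=
  (memLp_two_sqrt_abs (L1.integrable_coeFn F)).coeFn_toLp

theorem sqrtAbs_zero : sqrtAbs (0 : Lp ℝ 1 μ) = 0 := by
  refine Lp.ext ?_
  filter_upwards [coeFn_sqrtAbs (0 : Lp ℝ 1 μ), Lp.coeFn_zero ℝ 1 μ, Lp.coeFn_zero ℝ 2 μ]
    with s hsqrt h₁ h₂
  rw [hsqrt, h₁, h₂]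
  simp

theorem norm_sqrtAbs_sub_sqrtAbs_le (F F' : Lp ℝ 1 μ) :
    ‖sqrtAbs F - sqrtAbs F'‖ ≤ √‖F - F'‖ := by
  refine Real.le_sqrt_of_sq_le ?_
  rw [← real_inner_self_eq_norm_sq, L2.inner_def, L1.norm_eq_integral_norm]
  refine integral_mono_ae (L2.integrable_inner _ _) (L1.integrable_coeFn _).norm ?_
  filter_upwards [Lp.coeFn_sub (sqrtAbs F) (sqrtAbs F'), Lp.coeFn_sub F F', coeFn_sqrtAbs F,
    coeFn_sqrtAbs F'] with s hsqrt hsub hF hF'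
  rw [hsqrt, hsub, Pi.sub_apply, Pi.sub_apply, hF, hF', real_inner_self_eq_norm_sq,
    Real.norm_eq_abs, sq_abs]
  exact sq_sqrt_abs_sub_sqrt_abs_le (F s) (F' s)

theorem norm_sqrtAbs_le (F : Lp ℝ 1 μ) : ‖sqrtAbs F‖ ≤ √‖F‖ := by
  simpa [sqrtAbs_zero] using norm_sqrtAbs_sub_sqrtAbs_le F 0

end SqrtAbs

section MulLp

variable {S : Type*} [MeasurableSpace S] {μ : Measure S}

/-- Multiplication by an `L²` function, as an operator from `L²` to `L¹`. -/
noncomputable def mulLp (q : Lp ℝ 2 μ) : Lp ℝ 2 μ →L[ℝ] Lp ℝ 1 μ :=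
  (ContinuousLinearMap.mul ℝ ℝ).holderL μ 2 2 1 q

theorem coeFn_mulLp (q k : Lp ℝ 2 μ) : mulLp q k =ᵐ[μ] fun s => q s * k s :=
  (ContinuousLinearMap.mul ℝ ℝ).coeFn_holder q k

/-- The quotient `a / b`, cut off at `0` where `|a| / b ^ 2` exceeds `n`. The cutoff makes the
quotient of an integrable function by an arbitrary measurable function square integrable. -/
noncomputable def truncatedDiv (n : ℕ) (a b : ℝ) : ℝ :=
  if |a| ≤ n * b ^ 2 then a / b else 0

theorem sq_truncatedDiv_le (n : ℕ) (a b : ℝ) : truncatedDiv n a b ^ 2 ≤ n * |a| := by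
  unfold truncatedDiv
  split_ifs with h
  · rcases eq_or_ne b 0 with rfl | hb
    · rw [div_zero, zero_pow two_ne_zero]
      positivity
    · rw [div_pow, ← sq_abs a, div_le_iff₀ (by positivity)]
      nlinarith [abs_nonneg a]
  · rw [zero_pow two_ne_zero]
    positivity

theorem abs_mul_truncatedDiv_sub_le (n : ℕ) (a b : ℝ) : |b * truncatedDiv n a b - a| ≤ |a| := by
  unfold truncatedDiv
  split_ifs
  · rcases eq_or_ne b 0 with rfl | hb
    · simp
    · simp [mul_div_cancel₀ a hb]
  · simp

theorem eventually_mul_truncatedDiv_eq {a b : ℝ} (h : b = 0 → a = 0) :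
    ∀ᶠ n : ℕ in atTop, b * truncatedDiv n a b = a := by
  rcases eq_or_ne b 0 with hb | hb
  · simp [hb, h hb]
  · have hlarge := tendsto_natCast_atTop_atTop.eventually_ge_atTop (|a| / b ^ 2)
    filter_upwards [hlarge] with n hn
    rw [truncatedDiv, if_pos ((div_le_iff₀ (by positivity)).1 hn), mul_div_cancel₀ a hb]

theorem measurable_truncatedDiv (n : ℕ) :
    Measurable fun x : ℝ × ℝ => truncatedDiv n x.1 x.2 :=
  Measurable.ite (measurableSet_le (by fun_prop) (by fun_prop)) (by fun_prop) measurable_const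

theorem memLp_truncatedDiv {f q : S → ℝ} (hf : Integrable f μ) (hq : AEMeasurable q μ) (n : ℕ) :
    MemLp (fun s => truncatedDiv n (f s) (q s)) 2 μ := by
  have hmeas : AEMeasurable (fun s => truncatedDiv n (f s) (q s)) μ :=
    (measurable_truncatedDiv n).comp_aemeasurable (hf.1.aemeasurable.prodMk hq)
  rw [memLp_two_iff_integrable_sq hmeas.aestronglyMeasurable]
  refine (hf.abs.const_mul (n : ℝ)).mono' (hmeas.pow_const 2).aestronglyMeasurable
    (Eventually.of_forall fun s => ?_)
  rw [Real.norm_of_nonneg (sq_nonneg _)]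
  exact sq_truncatedDiv_le n (f s) (q s)

theorem mem_closure_range_mulLp {q : Lp ℝ 2 μ} {F : Lp ℝ 1 μ}
    (hF : ∀ᵐ s ∂μ, q s = 0 → F s = 0) : F ∈ closure (Set.range (mulLp q)) := by
  have hFint := L1.integrable_coeFn F
  have hqmeas := (Lp.aestronglyMeasurable q).aemeasurable
  set k : ℕ → Lp ℝ 2 μ := fun n => (memLp_truncatedDiv hFint hqmeas n).toLp
  have hk (n : ℕ) : mulLp q (k n) =ᵐ[μ] fun s => q s * truncatedDiv n (F s) (q s) := by
    filter_upwards [coeFn_mulLp q (k n), (memLp_truncatedDiv hFint hqmeas n).coeFn_toLp]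
      with s hmul hdiv
    rw [hmul, hdiv]
  have hnorm (n : ℕ) :
      ‖mulLp q (k n) - F‖ = ∫ s, ‖q s * truncatedDiv n (F s) (q s) - F s‖ ∂μ := by
    rw [L1.norm_eq_integral_norm]
    refine integral_congr_ae ?_
    filter_upwards [Lp.coeFn_sub (mulLp q (k n)) F, hk n] with s hsub hs
    rw [hsub, Pi.sub_apply, hs]
  refine mem_closure_of_tendsto (f := fun n => mulLp q (k n)) (b := atTop) ?_
    (Eventually.of_forall fun n => Set.mem_range_self (k n))
  rw [tendsto_iff_norm_sub_tendsto_zero]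
  simp only [hnorm]
  rw [← integral_zero S ℝ (μ := μ)]
  refine tendsto_integral_of_dominated_convergence (fun s => |F s|) (fun n => ?_) hFint.abs
    (fun n => Eventually.of_forall fun s => ?_) ?_
  · exact (((Lp.aestronglyMeasurable _).congr (hk n)).sub hFint.1).norm
  · rw [norm_norm]
    exact abs_mul_truncatedDiv_sub_le n (F s) (q s)
  · filter_upwards [hF] with s hs
    refine tendsto_const_nhds.congr' ?_
    filter_upwards [eventually_mul_truncatedDiv_eq hs] with n hn
    rw [hn, sub_self, norm_zero]

end MulLp

section KoopmanOneTwo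

open scoped Finset Topology

variable {G S : Type*} [AddCommGroup G] [MeasurableSpace S] [AddAction G S]
  [MeasurableConstVAdd G S] {μ : Measure S} [SigmaFinite μ] [IsNonsingularVAdd G μ]

theorem koopman_two_sqrtAbs (t : G) (F : Lp ℝ 1 μ) :
    koopman G ℝ μ 2 t (sqrtAbs F) = sqrtAbs (koopman G ℝ μ 1 t F) := by
  refine Lp.ext ?_
  filter_upwards [coeFn_koopman_two t (sqrtAbs F), coeFn_sqrtAbs (koopman G ℝ μ 1 t F),
    coeFn_koopman_one t F, (quasiMeasurePreserving_vadd t).ae (coeFn_sqrtAbs F)]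
    with s hleft hright hone hsqrt
  rw [hleft, hright, hone, hsqrt, abs_mul, NNReal.abs_eq, Real.sqrt_mul NNReal.zero_le_coe]

theorem koopman_one_mulLp (t : G) (q k : Lp ℝ 2 μ) :
    koopman G ℝ μ 1 t (mulLp q k) = mulLp (koopman G ℝ μ 2 t q) (koopman G ℝ μ 2 t k) := by
  refine Lp.ext ?_
  filter_upwards [coeFn_koopman_one t (mulLp q k),
    coeFn_mulLp (koopman G ℝ μ 2 t q) (koopman G ℝ μ 2 t k), coeFn_koopman_two t q,
    coeFn_koopman_two t k, (quasiMeasurePreserving_vadd t).ae (coeFn_mulLp q k)]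
    with s hleft hright hq hk hmul
  rw [hleft, hright, hq, hk, hmul, mul_mul_mul_comm, Real.mul_self_sqrt NNReal.zero_le_coe]

theorem orbitAverage_koopman_one_mulLp {q : Lp ℝ 2 μ} (hq : q ∈ fixedSubmodule (koopman G ℝ μ 2))
    (A : Finset G) (k : Lp ℝ 2 μ) :
    orbitAverage (koopman G ℝ μ 1) A (mulLp q k) =
      mulLp q (orbitAverage (koopman G ℝ μ 2) A k) := by
  simp only [orbitAverage_apply, map_smul, map_sum, koopman_one_mulLp, mem_fixedSubmodule.1 hq]

theorem coeFn_orbitAverage_koopman_one (A : Finset G) (F : Lp ℝ 1 μ) :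
    orbitAverage (koopman G ℝ μ 1) A F =ᵐ[μ]
      fun s => (#A : ℝ)⁻¹ * ∑ t ∈ A, jacobian μ t s * F (t +ᵥ s) := by
  have hterms : ∀ᵐ s ∂μ, ∀ t ∈ A, koopman G ℝ μ 1 t F s = jacobian μ t s * F (t +ᵥ s) :=
    (Finset.eventually_all A).2 fun t _ => coeFn_koopman_one t F
  rw [orbitAverage_apply]
  filter_upwards [hterms, Lp.coeFn_smul (#A : ℝ)⁻¹ (∑ t ∈ A, koopman G ℝ μ 1 t F),
    Lp.coeFn_finsetSum A fun t => koopman G ℝ μ 1 t F] with s hterms hsmul hsum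
  rw [hsmul, Pi.smul_apply, hsum, smul_eq_mul, Finset.sum_apply, Finset.sum_congr rfl hterms]

theorem ae_eq_of_mem_fixedSubmodule_koopman_two {q : Lp ℝ 2 μ}
    (hq : q ∈ fixedSubmodule (koopman G ℝ μ 2)) (t : G) :
    ∀ᵐ s ∂μ, q s = √(jacobian μ t s) * q (t +ᵥ s) := by
  have h := coeFn_koopman_two t q
  rwa [mem_fixedSubmodule.1 hq t] at h

theorem ae_eq_of_mem_fixedSubmodule_koopman_one {F : Lp ℝ 1 μ}
    (hF : F ∈ fixedSubmodule (koopman G ℝ μ 1)) (t : G) :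
    ∀ᵐ s ∂μ, F s = jacobian μ t s * F (t +ᵥ s) := by
  have h := coeFn_koopman_one t F
  rwa [mem_fixedSubmodule.1 hF t] at h

theorem orbitAverage_koopman_one_ae_eq_zero {q : Lp ℝ 2 μ} {F : Lp ℝ 1 μ}
    (hq : q ∈ fixedSubmodule (koopman G ℝ μ 2))
    (hF : ∀ᵐ s ∂μ, q s ≠ 0 → F s = 0) (A : Finset G) :
    ∀ᵐ s ∂μ, q s ≠ 0 → orbitAverage (koopman G ℝ μ 1) A F s = 0 := by
  have hterms : ∀ᵐ s ∂μ, ∀ t ∈ A, q s ≠ 0 → F (t +ᵥ s) = 0 := by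
    refine (Finset.eventually_all A).2 fun t _ => ?_
    filter_upwards [ae_eq_of_mem_fixedSubmodule_koopman_two hq t,
      (quasiMeasurePreserving_vadd t).ae hF] with s hqs hFs hne
    exact hFs (right_ne_zero_of_mul (hqs ▸ hne))
  filter_upwards [coeFn_orbitAverage_koopman_one A F, hterms] with s hs hterms hne
  rw [hs, Finset.sum_eq_zero fun t ht => by rw [hterms t ht hne, mul_zero], mul_zero]

end KoopmanOneTwo

section MaximalSupport

variable {G S : Type*} [AddCommGroup G] [MeasurableSpace S] [AddAction G S]
  [MeasurableConstVAdd G S] {μ : Measure S}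

theorem exists_Lp_two_ae_pos (μ : Measure S) [SigmaFinite μ] :
    ∃ e : Lp ℝ 2 μ, ∀ᵐ s ∂μ, 0 < e s := by
  obtain ⟨e, hpos, hmeas, hlt⟩ := exists_pos_lintegral_lt_of_sigmaFinite μ one_ne_zero
  have hint : Integrable (fun s => (e s : ℝ)) μ := by
    refine ⟨by fun_prop, ?_⟩
    simpa [hasFiniteIntegral_iff_enorm] using hlt.trans ENNReal.one_lt_top
  refine ⟨(memLp_two_sqrt_abs hint).toLp, ?_⟩
  filter_upwards [(memLp_two_sqrt_abs hint).coeFn_toLp] with s hs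
  rw [hs, NNReal.abs_eq]
  exact Real.sqrt_pos.2 (hpos s)

theorem inner_eq_zero_of_ae_eq_zero_or {𝕜 E : Type*} [RCLike 𝕜] [NormedAddCommGroup E]
    [InnerProductSpace 𝕜 E] {f g : Lp E 2 μ} (h : ∀ᵐ s ∂μ, f s = 0 ∨ g s = 0) :
    inner 𝕜 f g = 0 := by
  rw [L2.inner_def]
  refine integral_eq_zero_of_ae ?_
  filter_upwards [h] with s hs
  rcases hs with hs | hs <;> simp [hs]

theorem ae_eq_zero_of_inner_eq_zero {f e : Lp ℝ 2 μ} (hf : 0 ≤ᵐ[μ] f) (he : ∀ᵐ s ∂μ, 0 < e s)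
    (h : inner ℝ f e = 0) : f =ᵐ[μ] 0 := by
  have hnonneg : 0 ≤ᵐ[μ] fun s => inner ℝ (f s) (e s) := by
    filter_upwards [hf, he] with s hfs hes using mul_nonneg hes.le hfs
  rw [L2.inner_def, integral_eq_zero_iff_of_nonneg_ae hnonneg (L2.integrable_inner f e)] at h
  filter_upwards [h, he] with s hs hes
  exact (mul_eq_zero.1 hs).resolve_left hes.ne'

variable [SigmaFinite μ] [IsNonsingularVAdd G μ]

theorem mem_fixedSubmodule_of_ae_eq_indicator_abs {q b c : Lp ℝ 2 μ}
    (hq : q ∈ fixedSubmodule (koopman G ℝ μ 2)) (hb : b ∈ fixedSubmodule (koopman G ℝ μ 2))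
    (hc : c =ᵐ[μ] {s | q s = 0}.indicator fun s => |b s|) :
    c ∈ fixedSubmodule (koopman G ℝ μ 2) := by
  intro t
  refine Lp.ext ?_
  filter_upwards [coeFn_koopman_two t c, hc, (quasiMeasurePreserving_vadd t).ae hc,
    ae_eq_of_mem_fixedSubmodule_koopman_two hq t, ae_eq_of_mem_fixedSubmodule_koopman_two hb t]
    with s hkoopman hcs hct hqs hbs
  rw [hkoopman, hcs, hct]
  simp only [Set.indicator_apply, Set.mem_ofPred_eq]
  rcases eq_or_ne √(jacobian μ t s : ℝ) 0 with hzero | hne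
  · simp [hbs, hzero]
  · have hiff : q s = 0 ↔ q (t +ᵥ s) = 0 := by rw [hqs, mul_eq_zero_iff_left hne]
    simp only [hiff]
    split_ifs
    · rw [hbs, abs_mul, abs_of_nonneg (Real.sqrt_nonneg _)]
    · rw [mul_zero]

variable (G μ) in
theorem exists_mem_fixedSubmodule_maximal_support :
    ∃ q ∈ fixedSubmodule (koopman G ℝ μ 2), ∀ b ∈ fixedSubmodule (koopman G ℝ μ 2),
      ∀ᵐ s ∂μ, q s = 0 → b s = 0 := by
  obtain ⟨e, he⟩ := exists_Lp_two_ae_pos μ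
  set q := (fixedSubmodule (koopman G ℝ μ 2)).starProjection e
  have hq : q ∈ fixedSubmodule (koopman G ℝ μ 2) := Submodule.starProjection_apply_mem _ e
  refine ⟨q, hq, fun b hb => ?_⟩
  have hmeas : MeasurableSet {s | q s = 0} :=
    (Lp.stronglyMeasurable q).measurable (measurableSet_singleton 0)
  have hmem : MemLp ({s | q s = 0}.indicator fun s => |b s|) 2 μ :=
    (Lp.memLp b).abs.indicator hmeas
  set c := hmem.toLp
  have hc : c =ᵐ[μ] {s | q s = 0}.indicator fun s => |b s| := hmem.coeFn_toLp
  have hc_fixed := mem_fixedSubmodule_of_ae_eq_indicator_abs hq hb hc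
  have hcq : inner ℝ c q = 0 := by
    refine inner_eq_zero_of_ae_eq_zero_or ?_
    filter_upwards [hc] with s hs
    rw [hs, Set.indicator_apply_eq_zero]
    tauto
  have hce : inner ℝ c (e - q) = 0 := Submodule.inner_right_of_mem_orthogonal hc_fixed
    (Submodule.sub_starProjection_mem_orthogonal e)
  rw [inner_sub_right, hcq, sub_zero] at hce
  have hc_nonneg : 0 ≤ᵐ[μ] c := by
    filter_upwards [hc] with s hs
    rw [hs]
    exact Set.indicator_nonneg (fun s _ => abs_nonneg (b s)) s
  filter_upwards [hc, ae_eq_zero_of_inner_eq_zero hc_nonneg he hce] with s hs hzero hqs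
  rw [hs, Set.indicator_of_mem (show s ∈ {s | q s = 0} from hqs)] at hzero
  exact abs_eq_zero.1 hzero

end MaximalSupport

section PositiveAndNullParts

open scoped Topology

variable {G S ι : Type*} [AddCommGroup G] [MeasurableSpace G] [MeasurableSingletonClass G]
  [MeasurableSpace S] [AddAction G S] [MeasurableConstVAdd G S] {μ : Measure S} [SigmaFinite μ]
  [IsNonsingularVAdd G μ] {l : Filter ι} {A : ι → Finset G} {q : Lp ℝ 2 μ} {F : Lp ℝ 1 μ}

theorem exists_tendsto_orbitAverage_koopman_one [l.NeBot]
    (hA : IsAddFoelner G Measure.count l (fun i => (A i : Set G)))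
    (hq : q ∈ fixedSubmodule (koopman G ℝ μ 2)) (hF : ∀ᵐ s ∂μ, q s = 0 → F s = 0) :
    ∃ z, Tendsto (fun i => orbitAverage (koopman G ℝ μ 1) (A i) F) l (𝓝 z) := by
  refine exists_tendsto_of_mem_closure (fun i => norm_orbitAverage_le _ (A i)) ?_
    (mem_closure_range_mulLp hF)
  rintro _ ⟨k, rfl⟩
  simp only [orbitAverage_koopman_one_mulLp hq]
  exact ⟨_, ((mulLp q).continuous.tendsto _).comp (tendsto_orbitAverage_starProjection _ hA k)⟩

theorem tendsto_inner_sqrtAbs_orbitAverage_koopman_one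
    (hA : IsAddFoelner G Measure.count l (fun i => (A i : Set G)))
    (hq : q ∈ fixedSubmodule (koopman G ℝ μ 2))
    (hmax : ∀ b ∈ fixedSubmodule (koopman G ℝ μ 2), ∀ᵐ s ∂μ, q s = 0 → b s = 0)
    (hF : ∀ᵐ s ∂μ, q s ≠ 0 → F s = 0) (x : Lp ℝ 2 μ) :
    Tendsto (fun i => inner ℝ (sqrtAbs (orbitAverage (koopman G ℝ μ 1) (A i) F)) x) l (𝓝 0) := by
  refine tendsto_inner_zero_of_asymptotically_fixed (koopman G ℝ μ 2) (C := √‖F‖) (fun i => ?_)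
    (fun i => ?_) (fun u => ?_) x
  · refine (norm_sqrtAbs_le _).trans (Real.sqrt_le_sqrt ?_)
    simpa using (orbitAverage (koopman G ℝ μ 1) (A i)).le_of_opNorm_le
      (norm_orbitAverage_le _ (A i)) F
  · rw [Submodule.mem_orthogonal']
    intro b hb
    refine inner_eq_zero_of_ae_eq_zero_or ?_
    filter_upwards [hmax b hb, orbitAverage_koopman_one_ae_eq_zero hq hF (A i),
      coeFn_sqrtAbs (orbitAverage (koopman G ℝ μ 1) (A i) F)] with s hbs havg hsqrt
    rcases eq_or_ne (q s) 0 with hqs | hqs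
    · exact Or.inr (hbs hqs)
    · exact Or.inl (by rw [hsqrt, havg hqs, abs_zero, Real.sqrt_zero])
  · have hcob := (tendsto_orbitAverage_coboundary (koopman G ℝ μ 1) hA u F).norm.sqrt
    rw [norm_zero, Real.sqrt_zero] at hcob
    refine squeeze_zero_norm (fun i => ?_) hcob
    rw [koopman_two_sqrtAbs, apply_orbitAverage, map_sub]
    exact norm_sqrtAbs_sub_sqrtAbs_le _ _

end PositiveAndNullParts

section LocalConvergenceInMeasure

open scoped Topology

variable {S ι : Type*} [MeasurableSpace S] {μ : Measure S} {l : Filter ι}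

theorem tendstoInMeasure_add {E : Type*} [SeminormedAddCommGroup E] {g g' : ι → S → E}
    {f f' : S → E} (hg : TendstoInMeasure μ g l f) (hg' : TendstoInMeasure μ g' l f') :
    TendstoInMeasure μ (fun i => g i + g' i) l (f + f') := by
  rw [tendstoInMeasure_iff_norm] at *
  intro ε hε
  have hsum := (hg (ε / 2) (half_pos hε)).add (hg' (ε / 2) (half_pos hε))
  rw [add_zero] at hsum
  refine tendsto_of_tendsto_of_tendsto_of_le_of_le tendsto_const_nhds hsum (fun _ => zero_le)
    fun i => (measure_mono fun s hs => ?_).trans (measure_union_le _ _)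
  have hε_le : ε ≤ ‖g i s + g' i s - (f s + f' s)‖ := hs
  by_contra! hlt
  simp only [Set.mem_union, Set.mem_ofPred_eq, not_or, not_le] at hlt
  rw [add_sub_add_comm] at hε_le
  linarith [norm_add_le (g i s - f s) (g' i s - f' s)]

theorem tendstoInMeasure_zero_of_sqrt_abs {g : ι → S → ℝ}
    (h : TendstoInMeasure μ (fun i s => √|g i s|) l 0) : TendstoInMeasure μ g l 0 := by
  rw [tendstoInMeasure_iff_norm] at *
  intro ε hε
  have hiff (i : ι) (s : S) : √ε ≤ ‖√|g i s| - (0 : S → ℝ) s‖ ↔ ε ≤ ‖g i s - (0 : S → ℝ) s‖ := by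
    simp [abs_of_nonneg (Real.sqrt_nonneg _)]
  simpa only [hiff] using h √ε (Real.sqrt_pos.2 hε)

/-- Convergence in measure on every measurable set of finite measure. -/
def TendstoLocallyInMeasure {E : Type*} [EDist E] (μ : Measure S) (g : ι → S → E) (l : Filter ι)
    (f : S → E) : Prop :=
  ∀ B, MeasurableSet B → μ B < ⊤ → TendstoInMeasure (μ.restrict B) g l f

theorem TendstoLocallyInMeasure.tendsto_measure_lt_abs_sub_inter {g : ι → S → ℝ} {f : S → ℝ}
    (h : TendstoLocallyInMeasure μ g l f) {ε : ℝ} (hε : 0 < ε) {B : Set S}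
    (hB : MeasurableSet B) (hμB : μ B < ⊤) :
    Tendsto (fun i => μ ({s | ε < |g i s - f s|} ∩ B)) l (𝓝 0) := by
  refine tendsto_of_tendsto_of_tendsto_of_le_of_le tendsto_const_nhds
    (tendstoInMeasure_iff_norm.1 (h B hB hμB) ε hε) (fun _ => zero_le) fun i => ?_
  rw [← Measure.restrict_apply' hB]
  exact measure_mono fun s (hs : ε < |g i s - f s|) => hs.le

theorem tendstoLocallyInMeasure_of_tendsto_Lp {E : Type*} [NormedAddCommGroup E] {p : ENNReal}
    [Fact (1 ≤ p)] {g : ι → Lp E p μ} {f : Lp E p μ} (h : Tendsto g l (𝓝 f)) :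
    TendstoLocallyInMeasure μ (fun i => g i) l f := fun _ _ _ ε hε =>
  tendsto_of_tendsto_of_tendsto_of_le_of_le tendsto_const_nhds
    (tendstoInMeasure_of_tendsto_Lp h ε hε) (fun _ => zero_le)
    fun _ => Measure.restrict_apply_le _ _

theorem inner_sqrtAbs_indicatorConstLp (F : Lp ℝ 1 μ) {B : Set S} (hB : MeasurableSet B)
    (hμB : μ B ≠ ⊤) :
    inner ℝ (sqrtAbs F) (indicatorConstLp 2 hB hμB (1 : ℝ)) = ∫ s in B, √|F s| ∂μ := by
  rw [real_inner_comm, L2.inner_indicatorConstLp_eq_setIntegral_inner]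
  refine integral_congr_ae (ae_restrict_of_ae ?_)
  filter_upwards [coeFn_sqrtAbs F] with s hs
  simp [hs]

theorem tendstoLocallyInMeasure_zero_of_tendsto_inner_sqrtAbs {g : ι → Lp ℝ 1 μ}
    (h : ∀ x, Tendsto (fun i => inner ℝ (sqrtAbs (g i)) x) l (𝓝 0)) :
    TendstoLocallyInMeasure μ (fun i => g i) l 0 := by
  intro B hB hμB
  have : IsFiniteMeasure (μ.restrict B) := isFiniteMeasure_restrict.2 hμB.ne
  have hint (i : ι) : Integrable (fun s => √|g i s|) (μ.restrict B) :=
    ((memLp_two_sqrt_abs (L1.integrable_coeFn (g i))).restrict B).integrable one_le_two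
  have heLpNorm :
      Tendsto (fun i => eLpNorm ((fun s => √|g i s|) - 0) 1 (μ.restrict B)) l (𝓝 0) := by
    have hlim := ENNReal.tendsto_ofReal (h (indicatorConstLp 2 hB hμB.ne 1))
    rw [ENNReal.ofReal_zero] at hlim
    refine hlim.congr fun i => ?_
    rw [inner_sqrtAbs_indicatorConstLp, sub_zero, eLpNorm_one_eq_lintegral_enorm,
      ← ofReal_integral_norm_eq_lintegral_enorm (hint i)]
    simp only [Real.norm_of_nonneg (Real.sqrt_nonneg _)]
  exact tendstoInMeasure_zero_of_sqrt_abs <| tendstoInMeasure_of_tendsto_eLpNorm one_ne_zero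
    (fun i => (hint i).1) aestronglyMeasurable_zero heLpNorm

end LocalConvergenceInMeasure

section StochasticErgodicTheorem

open scoped Finset

theorem exists_add_eq_ae_eq_zero {S E : Type*} [MeasurableSpace S] [NormedAddCommGroup E]
    {μ : Measure S} {p : ENNReal} (F : Lp E p μ) {B : Set S} (hB : MeasurableSet B) :
    ∃ F₀ F₁ : Lp E p μ, F₀ + F₁ = F ∧ (∀ᵐ s ∂μ, s ∉ B → F₀ s = 0) ∧
      ∀ᵐ s ∂μ, s ∈ B → F₁ s = 0 := by
  have h₀ : MemLp (B.indicator F) p μ := (Lp.memLp F).indicator hB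
  have h₁ : MemLp (Bᶜ.indicator F) p μ := (Lp.memLp F).indicator hB.compl
  refine ⟨h₀.toLp, h₁.toLp, ?_, ?_, ?_⟩
  · rw [← MemLp.toLp_add]
    simp only [Set.indicator_self_add_compl, Lp.toLp_coeFn]
  · filter_upwards [h₀.coeFn_toLp] with s hs hsB
    rw [hs, Set.indicator_of_notMem hsB]
  · filter_upwards [h₁.coeFn_toLp] with s hs hsB
    rw [hs, Set.indicator_of_notMem (Set.notMem_compl_iff.2 hsB)]

variable {G S ι : Type*} [AddCommGroup G] [MeasurableSpace G] [MeasurableSingletonClass G]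
  [MeasurableSpace S] [AddAction G S] [MeasurableConstVAdd G S] {μ : Measure S} [SigmaFinite μ]
  [IsNonsingularVAdd G μ] {l : Filter ι} [l.NeBot] {A : ι → Finset G}

theorem exists_tendstoLocallyInMeasure_orbitAverage_koopman_one
    (hA : IsAddFoelner G Measure.count l (fun i => (A i : Set G))) (F : Lp ℝ 1 μ) :
    ∃ z ∈ fixedSubmodule (koopman G ℝ μ 1),
      TendstoLocallyInMeasure μ (fun i => orbitAverage (koopman G ℝ μ 1) (A i) F) l z := by
  obtain ⟨q, hq, hmax⟩ := exists_mem_fixedSubmodule_maximal_support G μ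
  have hmeas : MeasurableSet {s | q s ≠ 0} :=
    (Lp.stronglyMeasurable q).measurable (measurableSet_singleton 0).compl
  obtain ⟨F₀, F₁, rfl, hF₀, hF₁⟩ := exists_add_eq_ae_eq_zero F hmeas
  simp only [Set.mem_ofPred_eq, not_not] at hF₀ hF₁
  obtain ⟨z, hz⟩ := exists_tendsto_orbitAverage_koopman_one hA hq hF₀
  have hnull := tendstoLocallyInMeasure_zero_of_tendsto_inner_sqrtAbs
    (tendsto_inner_sqrtAbs_orbitAverage_koopman_one hA hq hmax hF₁)
  refine ⟨z, mem_fixedSubmodule_of_tendsto_orbitAverage hA hz, fun B hB hμB => ?_⟩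
  have hsum := tendstoInMeasure_add (tendstoLocallyInMeasure_of_tendsto_Lp hz B hB hμB)
    (hnull B hB hμB)
  rw [add_zero] at hsum
  refine hsum.congr_left fun i => ae_restrict_of_ae ?_
  rw [map_add]
  exact (Lp.coeFn_add _ _).symm

theorem stmt6_general (hA : IsAddFoelner G Measure.count l (fun i => (A i : Set G)))
    {w : G → S → ℝ} (hw : ∀ t, w t =ᵐ[μ] fun s => (jacobian μ t s : ℝ)) {f₀ : S → ℝ}
    (hf₀ : Integrable f₀ μ) :
    ∃ ftil : S → ℝ, Integrable ftil μ ∧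
      TendstoLocallyInMeasure μ
        (fun i s => (#(A i) : ℝ)⁻¹ * ∑ t ∈ A i, w t s * f₀ (t +ᵥ s)) l ftil ∧
      ∀ t, ∀ᵐ s ∂μ, w t s * ftil (t +ᵥ s) = ftil s := by
  obtain ⟨z, hz, htendsto⟩ :=
    exists_tendstoLocallyInMeasure_orbitAverage_koopman_one hA (hf₀.toL1 f₀)
  refine ⟨z, L1.integrable_coeFn z, fun B hB hμB => ?_, fun t => ?_⟩
  · refine (htendsto B hB hμB).congr_left fun i => ae_restrict_of_ae ?_
    have hterms : ∀ᵐ s ∂μ, ∀ t ∈ A i, w t s * f₀ (t +ᵥ s) =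
        jacobian μ t s * hf₀.toL1 f₀ (t +ᵥ s) := by
      refine (Finset.eventually_all (A i)).2 fun t _ => ?_
      filter_upwards [hw t, (quasiMeasurePreserving_vadd t).ae hf₀.coeFn_toL1] with s hws hfs
      rw [hws, hfs]
    filter_upwards [coeFn_orbitAverage_koopman_one (A i) (hf₀.toL1 f₀), hterms] with s hs hterms
    rw [hs, Finset.sum_congr rfl hterms]
  · filter_upwards [hw t, ae_eq_of_mem_fixedSubmodule_koopman_one hz t] with s hws hzs
    rw [hws, hzs]

end StochasticErgodicTheorem

/-- Multiparameter stochastic ergodic theorem, discrete case: for a nonsingular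
`ℤ^d`-action `{φ_t}` on a standard Borel space with σ-finite measure `μ`, with `w(t,·)` a
nonnegative measurable version of the Radon–Nikodym derivative of `A ↦ μ(φ_t(A))`
(i.e. of `μ ∘ φ_{-t}⁻¹`) with respect to `μ`, and `f₀ ∈ L¹(μ)`, the averages
`A_T f = (2T)^{-d} Σ_{t ∈ (−T,T]^d ∩ ℤ^d} w(t,·) f₀(φ_t(·))` converge locally in measure to
some `f̃ ∈ L¹(μ)` satisfying `w(t,s) f̃(φ_t(s)) = f̃(s)` a.e. for every `t`. -/
theorem stmt6 {S : Type*} [MeasurableSpace S] [StandardBorelSpace S]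
    (μ : Measure S) [SigmaFinite μ] (d : ℕ)
    (φ : (Fin d → ℤ) → S → S)
    (hφmeas : ∀ t, Measurable (φ t))
    (hid : ∀ s, φ 0 s = s)
    (hcomp : ∀ u v s, φ (u + v) s = φ u (φ v s))
    (hns : ∀ t, μ.map (φ t) ≪ μ ∧ μ ≪ μ.map (φ t))
    (w : (Fin d → ℤ) → S → ℝ)
    (hwmeas : ∀ t, Measurable (w t))
    (hwnonneg : ∀ t s, 0 ≤ w t s)
    (hwver : ∀ t, (fun s => ENNReal.ofReal (w t s)) =ᵐ[μ] (μ.map (φ (-t))).rnDeriv μ)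
    (f₀ : S → ℝ) (hf₀ : Integrable f₀ μ) :
    ∃ ftil : S → ℝ, Integrable ftil μ ∧
      (∀ ε : ℝ, 0 < ε → ∀ B : Set S, MeasurableSet B → μ B < ⊤ →
        Tendsto (fun T : ℕ =>
          μ ({s | ε < |((2 * T : ℝ) ^ d)⁻¹ *
              (∑ t ∈ Fintype.piFinset fun _ : Fin d => Finset.Ioc (-(T : ℤ)) (T : ℤ),
                w t s * f₀ (φ t s)) - ftil s|} ∩ B))
          atTop (nhds 0)) ∧
      (∀ t, ∀ᵐ s ∂μ, w t s * ftil (φ t s) = ftil s) := by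
  let _ : AddAction (Fin d → ℤ) S := { vadd := φ, zero_vadd := hid, add_vadd := hcomp }
  have : MeasurableConstVAdd (Fin d → ℤ) S := ⟨hφmeas⟩
  have : IsNonsingularVAdd (Fin d → ℤ) μ := ⟨fun t => (hns t).1⟩
  have hw (t : Fin d → ℤ) : w t =ᵐ[μ] fun s => (jacobian μ t s : ℝ) := by
    filter_upwards [hwver t] with s hs
    exact (ENNReal.toReal_ofReal (hwnonneg t s)).symm.trans (congrArg ENNReal.toReal hs)
  have hboxes := isAddFoelner_count_piFinset fun _ : Fin d => isAddFoelner_count_int_Ioc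
  have hcard (T : ℕ) :
      ((Fintype.piFinset fun _ : Fin d => Finset.Ioc (-T : ℤ) T).card : ℝ) = (2 * T) ^ d := by
    rw [Fintype.card_piFinset_const, Nat.cast_pow, card_Ioc_neg_natCast]
  obtain ⟨ftil, hint, hlim, hinv⟩ := stmt6_general hboxes hw hf₀
  simp only [hcard] at hlim
  exact ⟨ftil, hint,
    fun ε hε B hB hμB => hlim.tendsto_measure_lt_abs_sub_inter hε hB hμB, hinv⟩
end

section
/- (Multiparameter Birkhoff theorem, discrete case.) Let (S, 𝓑, μ) be a probability space and let {φ_t}_{t∈ℤ^d} be a measure-preserving ℤ^d-action on (S,μ), i.e., each φ_t is an invertible bi-measurable transformation with μ∘φ_t^{-1} = μ, φ_0 = id, and φ_{u+v} = φ_u∘φ_v. Let f₀ ∈ L¹(S,μ) and let 𝓘 denote the σ-algebra of all measurable sets A with φ_t^{-1}(A) = A for all t ∈ ℤ^d. Then the averages A_T f := (2T)^{-d} Σ_{t ∈ (−T,T]^d ∩ ℤ^d} f₀∘φ_t converge to the conditional expectation E_μ[f₀ | 𝓘] both μ-almost everywhere and in L¹(S,μ), as T → ∞. -/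
open MeasureTheory Filter

/-!
Averages are taken along a Følner sequence satisfying Tempelman's condition. A Vitali covering
argument in the group bounds the maximal function of the averages in weak `L¹`, so the functions
whose averages converge to their conditional expectation form a closed set in `L¹`, and hence in
`L²`. This set contains the invariant functions, whose averages are constant, and the
coboundaries, whose averages tend to `0` by the Følner property. Since a function in `L²` that is
orthogonal to all coboundaries is invariant, the set contains `L²`, which is dense in `L¹`.
-/

open scoped ENNReal Finset Pointwise symmDiff Topology

section Covering

variable {G : Type*} [AddCommGroup G] [DecidableEq G] {F : ℕ → Finset G} {C : ℕ}

/-- Tempelman's condition on a sequence of finite sets in an abelian group: the sets are nested and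
have difference sets of comparable size. It replaces the doubling property of balls in the Vitali
covering argument. -/
structure IsTempelman (F : ℕ → Finset G) (C : ℕ) : Prop where
  monotone : Monotone F
  card_sub_self_le (n : ℕ) : #(F n - F n) ≤ C * #(F n)

namespace IsTempelman

theorem exists_pairwiseDisjoint_card_le (hF : IsTempelman F C) (D : Finset G) (R : G → ℕ)
    (hne : ∀ t ∈ D, (F (R t)).Nonempty) :
    ∃ u ⊆ D, (u : Set G).PairwiseDisjoint (fun t => t +ᵥ F (R t)) ∧
      #D ≤ C * ∑ t ∈ u, #(F (R t)) := by
  -- With sizes `3 ^ R t` and ratio `2`, comparing sizes up to the ratio means comparing `R t`.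
  obtain ⟨u, huD, hdisj, hcov⟩ := Vitali.exists_disjoint_subfamily_covering_enlargement
    (fun t => ((t +ᵥ F (R t) : Finset G) : Set G)) D (fun t => (3 : ℝ) ^ R t) 2 one_lt_two
    (fun _ _ => by positivity) (∑ t ∈ D, (3 : ℝ) ^ R t)
    (fun t ht => Finset.single_le_sum (f := fun t => (3 : ℝ) ^ R t) (fun _ _ => by positivity) ht)
    (fun t ht => Finset.coe_nonempty.2 ((hne t ht).vadd_finset))
  lift u to Finset G using D.finite_toSet.subset huD
  have radius_le {a b : G} (h : (3 : ℝ) ^ R a ≤ 2 * 3 ^ R b) : R a ≤ R b := by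
    rw [← Nat.lt_succ_iff, ← pow_lt_pow_iff_right₀ (by norm_num : (1 : ℝ) < 3), pow_succ]
    have : (0 : ℝ) < 3 ^ R b := by positivity
    linarith
  have subset_biUnion : D ⊆ u.biUnion fun b => b +ᵥ (F (R b) - F (R b)) := by
    intro a ha
    obtain ⟨b, hb, ⟨x, hxa, hxb⟩, hab⟩ := hcov a ha
    obtain ⟨v, hv, rfl⟩ := Finset.mem_vadd_finset.1 hxa
    obtain ⟨w, hw, hwv⟩ := Finset.mem_vadd_finset.1 hxb
    refine Finset.mem_biUnion.2 ⟨b, hb, Finset.mem_vadd_finset.2 ⟨w - v,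
      Finset.sub_mem_sub hw (hF.monotone (radius_le hab) hv), ?_⟩⟩
    rw [vadd_eq_add, ← add_sub_assoc, sub_eq_iff_eq_add]
    exact hwv
  refine ⟨u, Finset.coe_subset.1 huD, fun a ha b hb hab => ?_, ?_⟩
  · exact Finset.disjoint_coe.1 (hdisj ha hb hab)
  calc #D ≤ ∑ b ∈ u, #(b +ᵥ (F (R b) - F (R b))) :=
        (Finset.card_le_card subset_biUnion).trans Finset.card_biUnion_le
    _ ≤ ∑ b ∈ u, C * #(F (R b)) := Finset.sum_le_sum fun b _ => by
        rw [Finset.card_vadd_finset]; exact hF.card_sub_self_le _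
    _ = C * ∑ b ∈ u, #(F (R b)) := (Finset.mul_sum _ _ _).symm

theorem mul_card_le_of_lt_sum (hF : IsTempelman F C) {a : G → ℝ≥0∞} {D B : Finset G} {R : G → ℕ}
    {lam : ℝ≥0∞} (hlam : ∀ t ∈ D, lam * #(F (R t)) < ∑ v ∈ t +ᵥ F (R t), a v)
    (hB : ∀ t ∈ D, t +ᵥ F (R t) ⊆ B) :
    lam * #D ≤ C * ∑ v ∈ B, a v := by
  have hne : ∀ t ∈ D, (F (R t)).Nonempty := fun t ht => by
    by_contra h
    simpa [Finset.not_nonempty_iff_eq_empty.1 h] using hlam t ht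
  obtain ⟨u, huD, hdisj, hcard⟩ := hF.exists_pairwiseDisjoint_card_le D R hne
  calc lam * #D ≤ lam * (C * ∑ t ∈ u, #(F (R t)) : ℕ) := by gcongr
    _ = C * ∑ t ∈ u, lam * #(F (R t)) := by push_cast; rw [← Finset.mul_sum]; ring
    _ ≤ C * ∑ t ∈ u, ∑ v ∈ t +ᵥ F (R t), a v := by
        gcongr with t ht
        exact (hlam t (huD ht)).le
    _ = C * ∑ v ∈ u.biUnion fun t => t +ᵥ F (R t), a v := by rw [Finset.sum_biUnion hdisj]
    _ ≤ C * ∑ v ∈ B, a v := by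
        gcongr
        exact Finset.biUnion_subset.2 fun t ht => hB t (huD ht)

end IsTempelman

end Covering

section Averages

variable {G S E : Type*} [VAdd G S] [NormedAddCommGroup E] [NormedSpace ℝ E]

/-- The ergodic average of `f` over the finite set `F` of group elements; it is `0` for empty `F`.
-/
noncomputable def ergodicAverage (F : Finset G) (f : S → E) (s : S) : E :=
  (#F : ℝ)⁻¹ • ∑ t ∈ F, f (t +ᵥ s)

theorem ergodicAverage_add (F : Finset G) (f g : S → E) :
    ergodicAverage F (f + g) = ergodicAverage F f + ergodicAverage F g := by
  ext s
  simp [ergodicAverage, Finset.sum_add_distrib]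

theorem ergodicAverage_clm_comp {E' : Type*} [NormedAddCommGroup E'] [NormedSpace ℝ E']
    (F : Finset G) (L : E →L[ℝ] E') (f : S → E) :
    ergodicAverage F (L ∘ f) = L ∘ ergodicAverage F f := by
  ext s
  simp [ergodicAverage]

theorem ergodicAverage_apply_of_invariant {F : Finset G} (hF : F.Nonempty) {f : S → E} {s : S}
    (hf : ∀ t : G, f (t +ᵥ s) = f s) : ergodicAverage F f s = f s := by
  have : (#F : ℝ) ≠ 0 := by exact_mod_cast hF.card_ne_zero
  simp [ergodicAverage, hf, ← Nat.cast_smul_eq_nsmul ℝ, smul_smul, this]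

theorem enorm_ergodicAverage (F : Finset G) (f : S → E) (s : S) :
    ‖ergodicAverage F f s‖ₑ = ‖∑ t ∈ F, f (t +ᵥ s)‖ₑ / #F := by
  rcases F.eq_empty_or_nonempty with rfl | hF
  · simp [ergodicAverage]
  have : (#F : ℝ) ≠ 0 := by exact_mod_cast hF.card_ne_zero
  rw [ergodicAverage, enorm_smul, enorm_inv this, Real.enorm_natCast, mul_comm, div_eq_mul_inv]

theorem mul_card_lt_of_lt_enorm_ergodicAverage {F : Finset G} {f : S → E} {s : S} {lam : ℝ≥0∞}
    (h : lam < ‖ergodicAverage F f s‖ₑ) : lam * #F < ∑ t ∈ F, ‖f (t +ᵥ s)‖ₑ := by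
  rw [enorm_ergodicAverage, ENNReal.lt_div_iff_mul_lt (.inr h.ne_top)
    (.inl (ENNReal.natCast_ne_top _))] at h
  exact h.trans_le (enorm_sum_le _ _)

variable [MeasurableSpace S] [MeasurableConstVAdd G S] {μ : Measure S} [VAddInvariantMeasure G S μ]

theorem ergodicAverage_congr_ae (F : Finset G) {f g : S → E} (h : f =ᵐ[μ] g) :
    ergodicAverage F f =ᵐ[μ] ergodicAverage F g := by
  have htranslate : ∀ᵐ s ∂μ, ∀ t ∈ F, f (t +ᵥ s) = g (t +ᵥ s) :=
    (Finset.eventually_all F).2 fun t _ =>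
      (measurePreserving_vadd t μ).quasiMeasurePreserving.ae h
  filter_upwards [htranslate] with s hs
  rw [ergodicAverage, ergodicAverage, Finset.sum_congr rfl hs]

theorem aestronglyMeasurable_ergodicAverage (F : Finset G) {f : S → E}
    (hf : AEStronglyMeasurable f μ) : AEStronglyMeasurable (ergodicAverage F f) μ :=
  (Finset.aestronglyMeasurable_fun_sum F fun t _ =>
    hf.comp_measurePreserving (measurePreserving_vadd t μ)).const_smul _

theorem eLpNorm_ergodicAverage_le (F : Finset G) {f : S → E} (hf : AEStronglyMeasurable f μ)
    {p : ℝ≥0∞} (hp : 1 ≤ p) : eLpNorm (ergodicAverage F f) p μ ≤ eLpNorm f p μ := by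
  rcases F.eq_empty_or_nonempty with rfl | hF
  · have : ergodicAverage (∅ : Finset G) f = 0 := by ext; simp [ergodicAverage]
    simp [this]
  have hcard : (#F : ℝ) ≠ 0 := by exact_mod_cast hF.card_ne_zero
  have hsum : ergodicAverage F f = (#F : ℝ)⁻¹ • ∑ t ∈ F, f ∘ (t +ᵥ ·) := by
    ext; simp [ergodicAverage]
  calc eLpNorm (ergodicAverage F f) p μ
      ≤ ‖(#F : ℝ)⁻¹‖ₑ * ∑ t ∈ F, eLpNorm (f ∘ (t +ᵥ ·)) p μ := by
        rw [hsum, eLpNorm_const_smul]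
        gcongr
        exact eLpNorm_sum_le
          (fun t _ => hf.comp_measurePreserving (measurePreserving_vadd t μ)) hp
    _ = ‖(#F : ℝ)⁻¹‖ₑ * (#F * eLpNorm f p μ) := by
        simp [eLpNorm_comp_measurePreserving hf (measurePreserving_vadd _ μ)]
    _ = eLpNorm f p μ := by
        rw [← mul_assoc, ← Real.enorm_natCast, ← enorm_mul, inv_mul_cancel₀ hcard, enorm_one,
          one_mul]

theorem lintegral_sum_vadd (F : Finset G) {g : S → ℝ≥0∞} (hg : Measurable g) :
    ∫⁻ s, ∑ t ∈ F, g (t +ᵥ s) ∂μ = #F * ∫⁻ s, g s ∂μ := by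
  rw [lintegral_finsetSum (f := fun t s => g (t +ᵥ s)) _ fun t _ =>
    hg.comp (measurable_const_vadd t)]
  simp [(measurePreserving_vadd _ μ).lintegral_comp hg]

end Averages

section MaximalInequality

section ExceedanceSet

variable {G S : Type*} [VAdd G S]

/-- The points at which the ergodic average of `g` over one of `F 0, …, F N` exceeds `lam`,
with the denominators cleared. -/
def exceedanceSet (F : ℕ → Finset G) (g : S → ℝ≥0∞) (lam : ℝ≥0∞) (N : ℕ) : Set S :=
  {s | ∃ n ≤ N, lam * #(F n) < ∑ t ∈ F n, g (t +ᵥ s)}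

theorem monotone_exceedanceSet (F : ℕ → Finset G) (g : S → ℝ≥0∞) (lam : ℝ≥0∞) :
    Monotone (exceedanceSet F g lam) :=
  fun _ _ hNM _ ⟨n, hn, hs⟩ => ⟨n, hn.trans hNM, hs⟩

theorem measurableSet_exceedanceSet [MeasurableSpace S] [MeasurableConstVAdd G S]
    (F : ℕ → Finset G) {g : S → ℝ≥0∞} (hg : Measurable g) (lam : ℝ≥0∞) (N : ℕ) :
    MeasurableSet (exceedanceSet F g lam N) := by
  simp only [exceedanceSet, Set.ofPred_exists, Set.ofPred_and]
  refine .iUnion fun n => .inter (.const _) (measurableSet_lt measurable_const ?_)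
  exact Finset.measurable_fun_sum _ fun t _ => hg.comp (measurable_const_vadd t)

end ExceedanceSet

variable {G S : Type*} [AddCommGroup G] [AddAction G S] {F : ℕ → Finset G} {C : ℕ}

namespace IsTempelman

variable [DecidableEq G]

theorem mul_sum_indicator_exceedanceSet_le (hF : IsTempelman F C) (g : S → ℝ≥0∞) (lam : ℝ≥0∞)
    (N : ℕ) (s : S) :
    lam * ∑ t ∈ -F N, (exceedanceSet F g lam N).indicator 1 (t +ᵥ s) ≤
      C * ∑ t ∈ F N - F N, g (t +ᵥ s) := by
  classical
  have exists_index (t : G) (ht : t +ᵥ s ∈ exceedanceSet F g lam N) :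
      ∃ n ≤ N, lam * #(F n) < ∑ v ∈ t +ᵥ F n, g (v +ᵥ s) := by
    obtain ⟨n, hn, hs⟩ := ht
    refine ⟨n, hn, hs.trans_eq ?_⟩
    rw [Finset.vadd_finset_def, Finset.sum_image (AddAction.injective t).injOn]
    simp_rw [vadd_vadd, add_comm _ t]
    rfl
  choose! R hRN hR using exists_index
  have sum_eq_card : ∑ t ∈ -F N, (exceedanceSet F g lam N).indicator 1 (t +ᵥ s) =
      (#{t ∈ -F N | t +ᵥ s ∈ exceedanceSet F g lam N} : ℝ≥0∞) := by
    simp_rw [Set.indicator_apply, Pi.one_apply, Finset.sum_boole]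
  rw [sum_eq_card]
  refine hF.mul_card_le_of_lt_sum (R := R) (fun t ht => hR t (Finset.mem_filter.1 ht).2)
    fun t ht => ?_
  obtain ⟨htN, hts⟩ := Finset.mem_filter.1 ht
  rw [sub_eq_add_neg, add_comm]
  exact (Finset.vadd_finset_subset_vadd htN).trans
    (Finset.add_subset_add_left (hF.monotone (hRN t hts)))

variable [MeasurableSpace S] [MeasurableConstVAdd G S] {μ : Measure S} [VAddInvariantMeasure G S μ]

theorem mul_measure_exceedanceSet_le (hF : IsTempelman F C) {g : S → ℝ≥0∞} (hg : Measurable g)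
    (lam : ℝ≥0∞) (N : ℕ) :
    lam * μ (exceedanceSet F g lam N) ≤ C ^ 2 * ∫⁻ s, g s ∂μ := by
  rcases (F N).eq_empty_or_nonempty with hFN | hFN
  · have : exceedanceSet F g lam N = ∅ := Set.eq_empty_of_forall_notMem fun s ⟨n, hn, hs⟩ => by
      simp [Finset.subset_empty.1 (hFN ▸ hF.monotone hn)] at hs
    simp [this]
  have hmeas := measurableSet_exceedanceSet F hg lam N
  have hind : Measurable ((exceedanceSet F g lam N).indicator (1 : S → ℝ≥0∞)) :=
    measurable_one.indicator hmeas
  have integrated := lintegral_mono (μ := μ) (hF.mul_sum_indicator_exceedanceSet_le g lam N)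
  rw [lintegral_const_mul _ (by fun_prop), lintegral_const_mul _ (by fun_prop),
    lintegral_sum_vadd _ hind, lintegral_sum_vadd _ hg, lintegral_indicator_one hmeas,
    Finset.card_neg] at integrated
  rw [← ENNReal.mul_le_mul_iff_right (a := #(F N)) (by simpa using hFN.ne_empty)
    (ENNReal.natCast_ne_top _)]
  calc #(F N) * (lam * μ (exceedanceSet F g lam N))
      = lam * (#(F N) * μ (exceedanceSet F g lam N)) := by ring
    _ ≤ C * (#(F N - F N) * ∫⁻ s, g s ∂μ) := integrated
    _ ≤ C * ((C * #(F N) : ℕ) * ∫⁻ s, g s ∂μ) := by gcongr; exact hF.card_sub_self_le N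
    _ = #(F N) * (C ^ 2 * ∫⁻ s, g s ∂μ) := by push_cast; ring

variable {E : Type*} [NormedAddCommGroup E] [NormedSpace ℝ E]

theorem mul_measure_lt_iSup_enorm_ergodicAverage_le (hF : IsTempelman F C) {f : S → E}
    (hf : AEStronglyMeasurable f μ) (lam : ℝ≥0∞) :
    lam * μ {s | lam < ⨆ n, ‖ergodicAverage (F n) f s‖ₑ} ≤ C ^ 2 * eLpNorm f 1 μ := by
  set g : S → ℝ≥0∞ := fun s => ‖hf.mk f s‖ₑ
  have hg : Measurable g := hf.stronglyMeasurable_mk.enorm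
  have hsub : ({s | lam < ⨆ n, ‖ergodicAverage (F n) f s‖ₑ} : Set S) ≤ᵐ[μ]
      ⋃ N, exceedanceSet F g lam N := by
    filter_upwards [ae_all_iff.2 fun n => ergodicAverage_congr_ae (F n) hf.ae_eq_mk] with s hs h
    obtain ⟨n, hn⟩ := lt_iSup_iff.1 h
    exact Set.mem_iUnion.2 ⟨n, n, le_rfl, mul_card_lt_of_lt_enorm_ergodicAverage (hs n ▸ hn)⟩
  calc lam * μ {s | lam < ⨆ n, ‖ergodicAverage (F n) f s‖ₑ}
      ≤ lam * μ (⋃ N, exceedanceSet F g lam N) := mul_le_mul_right (measure_mono_ae hsub) _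
    _ = ⨆ N, lam * μ (exceedanceSet F g lam N) := by
        rw [(monotone_exceedanceSet F g lam).measure_iUnion, ENNReal.mul_iSup]
    _ ≤ C ^ 2 * ∫⁻ s, g s ∂μ := iSup_le fun N => hF.mul_measure_exceedanceSet_le hg lam N
    _ = C ^ 2 * eLpNorm f 1 μ := by
        rw [eLpNorm_congr_ae hf.ae_eq_mk, eLpNorm_one_eq_lintegral_enorm]

end IsTempelman

end MaximalInequality

section InvariantSigmaAlgebra

/-- The σ-algebra of the measurable subsets of `S` that are invariant under every element of `G`. -/
abbrev invariantSigmaAlgebra (G S : Type*) [VAdd G S] [m : MeasurableSpace S] :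
    MeasurableSpace S where
  MeasurableSet' A := MeasurableSet[m] A ∧ ∀ t : G, (t +ᵥ ·) ⁻¹' A = A
  measurableSet_empty := by simp
  measurableSet_compl A hA := ⟨hA.1.compl, fun t => by rw [Set.preimage_compl, hA.2 t]⟩
  measurableSet_iUnion A hA :=
    ⟨.iUnion fun n => (hA n).1, fun t => by simp only [Set.preimage_iUnion, fun n => (hA n).2 t]⟩

theorem invariantSigmaAlgebra_le (G S : Type*) [VAdd G S] [m : MeasurableSpace S] :
    invariantSigmaAlgebra G S ≤ m :=
  fun _ hA => hA.1

theorem stronglyMeasurable_invariantSigmaAlgebra {G S E : Type*} [VAdd G S] [MeasurableSpace S]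
    [TopologicalSpace E] [TopologicalSpace.PseudoMetrizableSpace E] {f : S → E}
    (hf : StronglyMeasurable f) (hinv : ∀ (t : G) (s : S), f (t +ᵥ s) = f s) :
    StronglyMeasurable[invariantSigmaAlgebra G S] f := by
  borelize E
  refine stronglyMeasurable_iff_measurable_separable.2
    ⟨fun B hB => ⟨hf.measurable hB, fun t => ?_⟩, hf.isSeparable_range⟩
  ext s
  simp only [Set.mem_preimage, hinv]

variable {G S E : Type*} [AddGroup G] [AddAction G S] [MeasurableSpace S] [MeasurableConstVAdd G S]
  {μ : Measure S} [NormedAddCommGroup E]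

theorem aestronglyMeasurable_invariantSigmaAlgebra [Countable G] [VAddInvariantMeasure G S μ]
    {f : S → E} (hf : AEStronglyMeasurable f μ) (hinv : ∀ t : G, f ∘ (t +ᵥ ·) =ᵐ[μ] f) :
    AEStronglyMeasurable[invariantSigmaAlgebra G S] f μ := by
  set g := hf.mk f
  have hfg : f =ᵐ[μ] g := hf.ae_eq_mk
  have hg : StronglyMeasurable g := hf.stronglyMeasurable_mk
  have hgt (t : G) : StronglyMeasurable fun s => g (t +ᵥ s) :=
    hg.comp_measurable (measurable_const_vadd t)
  -- Cutting `g` off outside the invariant set `A` makes it strictly invariant.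
  set A : Set S := {s | ∀ t : G, g (t +ᵥ s) = g s}
  have hA : MeasurableSet A := by
    rw [show A = ⋂ t : G, {s | g (t +ᵥ s) = g s} from Set.ofPred_forall _]
    exact .iInter fun t => (hgt t).measurableSet_eq_fun hg
  have vadd_mem (u : G) {s : S} (hs : s ∈ A) : u +ᵥ s ∈ A := fun t => by
    rw [vadd_vadd, hs, hs]
  have vadd_mem_iff (u : G) (s : S) : u +ᵥ s ∈ A ↔ s ∈ A :=
    ⟨fun hs => by simpa using vadd_mem (-u) hs, vadd_mem u⟩
  have ae_mem : ∀ᵐ s ∂μ, s ∈ A := ae_all_iff.2 fun t => by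
    filter_upwards [hinv t, hfg,
      (measurePreserving_vadd t μ).quasiMeasurePreserving.ae hfg] with s h h₀ ht
    rw [← ht, ← h₀]
    exact h
  refine ⟨A.indicator g, stronglyMeasurable_invariantSigmaAlgebra (G := G) (hg.indicator hA)
    fun t s => ?_, ?_⟩
  · by_cases hs : s ∈ A
    · rw [Set.indicator_of_mem hs, Set.indicator_of_mem (vadd_mem t hs), hs t]
    · rw [Set.indicator_of_notMem hs, Set.indicator_of_notMem (mt (vadd_mem_iff t s).1 hs)]
  · filter_upwards [hfg, ae_mem] with s h₀ hs
    rw [Set.indicator_of_mem hs, h₀]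

theorem condExp_comp_vadd [IsFiniteMeasure μ] [VAddInvariantMeasure G S μ] [NormedSpace ℝ E]
    [CompleteSpace E] {f : S → E} (hf : Integrable f μ) (t : G) :
    μ[f ∘ (t +ᵥ ·)|invariantSigmaAlgebra G S] =ᵐ[μ] μ[f|invariantSigmaAlgebra G S] := by
  have hle := invariantSigmaAlgebra_le G S
  have hpres := measurePreserving_vadd t μ
  refine (ae_eq_condExp_of_forall_setIntegral_eq hle (hpres.integrable_comp_of_integrable hf)
    (fun _ _ _ => integrable_condExp.integrableOn) (fun A hA _ => ?_)
    stronglyMeasurable_condExp.aestronglyMeasurable).symm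
  have hcomp := hpres.setIntegral_preimage_emb (measurableEmbedding_const_vadd t) f A
  rw [hA.2 t] at hcomp
  rw [setIntegral_condExp hle hf hA]
  exact hcomp.symm

end InvariantSigmaAlgebra

section DensityPrinciples

variable {α E : Type*} [MeasurableSpace α] {μ : Measure α} [NormedAddCommGroup E]
  {u : ℕ → α → E}

-- Banach's principle: a weak-type bound turns approximability into almost everywhere convergence.
theorem ae_tendsto_zero_of_weakType_approx
    (happrox : ∀ ε : ℝ≥0∞, ε ≠ 0 → ∃ v : ℕ → α → E,
      (∀ᵐ x ∂μ, Tendsto (fun n => v n x) atTop (𝓝 0)) ∧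
      ∀ lam : ℝ≥0∞, lam * μ {x | lam < ⨆ n, ‖u n x - v n x‖ₑ} ≤ ε) :
    ∀ᵐ x ∂μ, Tendsto (fun n => u n x) atTop (𝓝 0) := by
  have eventually_le (lam : ℝ≥0∞) (hlam : lam ≠ 0) :
      ∀ᵐ x ∂μ, ∀ᶠ n in atTop, ‖u n x‖ₑ ≤ lam + lam := by
    suffices lam * μ {x | ¬ ∀ᶠ n in atTop, ‖u n x‖ₑ ≤ lam + lam} ≤ 0 from
      (mul_eq_zero.1 (nonpos_iff_eq_zero.1 this)).resolve_left hlam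
    refine le_of_forall_gt_imp_ge_of_dense fun ε hε => ?_
    obtain ⟨v, hv, hweak⟩ := happrox ε hε.ne'
    refine le_trans (mul_le_mul_right (measure_mono_ae ?_) _) (hweak lam)
    filter_upwards [hv] with x hx hux
    by_contra hsup
    refine hux ?_
    have hx' := tendsto_zero_iff_enorm_tendsto_zero.1 hx
    filter_upwards [ENNReal.tendsto_nhds_zero.1 hx' lam (pos_iff_ne_zero.2 hlam)] with n hn
    calc ‖u n x‖ₑ = ‖(u n x - v n x) + v n x‖ₑ := by rw [sub_add_cancel]
      _ ≤ ‖u n x - v n x‖ₑ + ‖v n x‖ₑ := enorm_add_le _ _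
      _ ≤ lam + lam := add_le_add ((le_iSup _ n).trans (not_lt.1 hsup)) hn
  have hall := ae_all_iff.2 fun k : ℕ =>
    eventually_le (k : ℝ≥0∞)⁻¹ (ENNReal.inv_ne_zero.2 (ENNReal.natCast_ne_top k))
  filter_upwards [hall] with x hx
  refine tendsto_zero_iff_enorm_tendsto_zero.2 (ENNReal.tendsto_nhds_zero.2 fun ε hε => ?_)
  obtain ⟨k, hk⟩ := ENNReal.exists_inv_nat_lt (ENNReal.half_pos hε.ne').ne'
  filter_upwards [hx k] with n hn
  exact hn.trans ((add_le_add hk.le hk.le).trans_eq (ENNReal.add_halves ε))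

theorem tendsto_eLpNorm_zero_of_approx {p : ℝ≥0∞} (hp : 1 ≤ p)
    (hu : ∀ n, AEStronglyMeasurable (u n) μ)
    (happrox : ∀ ε : ℝ≥0∞, ε ≠ 0 → ∃ v : ℕ → α → E, (∀ n, AEStronglyMeasurable (v n) μ) ∧
      Tendsto (fun n => eLpNorm (v n) p μ) atTop (𝓝 0) ∧ ∀ n, eLpNorm (u n - v n) p μ ≤ ε) :
    Tendsto (fun n => eLpNorm (u n) p μ) atTop (𝓝 0) := by
  refine ENNReal.tendsto_nhds_zero.2 fun ε hε => ?_
  have hε2 := ENNReal.half_pos hε.ne'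
  obtain ⟨v, hv, hv0, huv⟩ := happrox (ε / 2) hε2.ne'
  filter_upwards [ENNReal.tendsto_nhds_zero.1 hv0 _ hε2] with n hn
  calc eLpNorm (u n) p μ = eLpNorm ((u n - v n) + v n) p μ := by rw [sub_add_cancel]
    _ ≤ eLpNorm (u n - v n) p μ + eLpNorm (v n) p μ := eLpNorm_add_le ((hu n).sub (hv n)) (hv n) hp
    _ ≤ ε / 2 + ε / 2 := add_le_add (huv n) hn
    _ = ε := ENNReal.add_halves ε

end DensityPrinciples

section CondExpError

variable {G S E : Type*} [VAdd G S] [MeasurableSpace S] [NormedAddCommGroup E] [NormedSpace ℝ E]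
  {μ : Measure S}

/-- The difference between the ergodic average of `f` over `F` and its expected limit, the
conditional expectation of `f` with respect to the invariant sets. -/
noncomputable def condExpError (F : Finset G) (μ : Measure S) (f : S → E) : S → E :=
  ergodicAverage F f - μ[f|invariantSigmaAlgebra G S]

theorem condExpError_zero (F : Finset G) (μ : Measure S) :
    condExpError F μ (0 : S → E) = 0 := by
  ext s
  simp [condExpError, ergodicAverage, condExp_zero]

variable [CompleteSpace E]

theorem condExpError_add (F : Finset G) {f g : S → E} (hf : Integrable f μ) (hg : Integrable g μ) :
    condExpError F μ (f + g) =ᵐ[μ] condExpError F μ f + condExpError F μ g := by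
  filter_upwards [condExp_add hf hg (invariantSigmaAlgebra G S)] with s hs
  simp only [condExpError, ergodicAverage_add, Pi.sub_apply, Pi.add_apply, hs]
  abel

theorem condExpError_sub (F : Finset G) {f g : S → E} (hf : Integrable f μ) (hg : Integrable g μ) :
    condExpError F μ (f - g) =ᵐ[μ] condExpError F μ f - condExpError F μ g := by
  have hadd := condExpError_add F (hf.sub hg) hg
  rw [sub_add_cancel] at hadd
  filter_upwards [hadd] with s hs
  rw [Pi.sub_apply, hs, Pi.add_apply, add_sub_cancel_right]

theorem condExpError_clm_comp {E' : Type*} [NormedAddCommGroup E'] [NormedSpace ℝ E']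
    [CompleteSpace E'] (F : Finset G) (L : E →L[ℝ] E') {f : S → E} (hf : Integrable f μ) :
    condExpError F μ (L ∘ f) =ᵐ[μ] L ∘ condExpError F μ f := by
  filter_upwards [L.comp_condExp_comm hf (m := invariantSigmaAlgebra G S)] with s hs
  simp only [condExpError, ergodicAverage_clm_comp, Pi.sub_apply, Function.comp_apply, map_sub,
    ← hs]

variable [MeasurableConstVAdd G S] [VAddInvariantMeasure G S μ]

theorem condExpError_congr_ae (F : Finset G) {f g : S → E} (h : f =ᵐ[μ] g) :
    condExpError F μ f =ᵐ[μ] condExpError F μ g :=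
  (ergodicAverage_congr_ae F h).sub (condExp_congr_ae h)

theorem aestronglyMeasurable_condExpError (F : Finset G) {f : S → E}
    (hf : AEStronglyMeasurable f μ) : AEStronglyMeasurable (condExpError F μ f) μ :=
  (aestronglyMeasurable_ergodicAverage F hf).sub integrable_condExp.1

theorem eLpNorm_one_condExpError_le (F : Finset G) {f : S → E} (hf : AEStronglyMeasurable f μ) :
    eLpNorm (condExpError F μ f) 1 μ ≤ 2 * eLpNorm f 1 μ := by
  calc eLpNorm (condExpError F μ f) 1 μ
      ≤ eLpNorm (ergodicAverage F f) 1 μ + eLpNorm (μ[f|invariantSigmaAlgebra G S]) 1 μ :=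
        eLpNorm_sub_le (aestronglyMeasurable_ergodicAverage F hf) integrable_condExp.1 le_rfl
    _ ≤ eLpNorm f 1 μ + eLpNorm f 1 μ :=
        add_le_add (eLpNorm_ergodicAverage_le F hf le_rfl) (eLpNorm_condExp_le_eLpNorm f le_rfl)
    _ = 2 * eLpNorm f 1 μ := (two_mul _).symm

end CondExpError

section WeakType

variable {G S E : Type*} [AddCommGroup G] [DecidableEq G] [AddAction G S] [MeasurableSpace S]
  [MeasurableConstVAdd G S] {μ : Measure S} [VAddInvariantMeasure G S μ] [NormedAddCommGroup E]
  [NormedSpace ℝ E] [CompleteSpace E] {F : ℕ → Finset G} {C : ℕ}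

theorem IsTempelman.mul_measure_lt_iSup_enorm_condExpError_le (hF : IsTempelman F C) {f : S → E}
    (hf : AEStronglyMeasurable f μ) (lam : ℝ≥0∞) :
    lam * μ {s | lam < ⨆ n, ‖condExpError (F n) μ f s‖ₑ} ≤ 2 * (C ^ 2 + 1) * eLpNorm f 1 μ := by
  set f' : S → E := μ[f|invariantSigmaAlgebra G S]
  have hsub : {s | lam < ⨆ n, ‖condExpError (F n) μ f s‖ₑ} ⊆
      {s | lam / 2 < ⨆ n, ‖ergodicAverage (F n) f s‖ₑ} ∪ {s | lam / 2 ≤ ‖f' s‖ₑ} := by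
    intro s hs
    by_contra hmem
    obtain ⟨havg, hcond⟩ : (⨆ n, ‖ergodicAverage (F n) f s‖ₑ) ≤ lam / 2 ∧ ‖f' s‖ₑ < lam / 2 := by
      simpa using hmem
    refine (Set.mem_ofPred.1 hs).not_ge (iSup_le fun n => ?_)
    calc ‖condExpError (F n) μ f s‖ₑ ≤ ‖ergodicAverage (F n) f s‖ₑ + ‖f' s‖ₑ := enorm_sub_le
      _ ≤ lam / 2 + lam / 2 := add_le_add ((le_iSup _ n).trans havg) hcond.le
      _ = lam := ENNReal.add_halves lam
  have markov : lam / 2 * μ {s | lam / 2 ≤ ‖f' s‖ₑ} ≤ eLpNorm f 1 μ :=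
    (mul_meas_ge_le_lintegral₀ integrable_condExp.1.enorm _).trans
      (eLpNorm_one_eq_lintegral_enorm.ge.trans (eLpNorm_condExp_le_eLpNorm f le_rfl))
  calc lam * μ {s | lam < ⨆ n, ‖condExpError (F n) μ f s‖ₑ}
      ≤ 2 * (lam / 2) * (μ {s | lam / 2 < ⨆ n, ‖ergodicAverage (F n) f s‖ₑ} +
          μ {s | lam / 2 ≤ ‖f' s‖ₑ}) := by
        rw [ENNReal.mul_div_cancel two_ne_zero ENNReal.ofNat_ne_top]
        gcongr
        exact (measure_mono hsub).trans (measure_union_le _ _)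
    _ = 2 * (lam / 2 * μ {s | lam / 2 < ⨆ n, ‖ergodicAverage (F n) f s‖ₑ} +
          lam / 2 * μ {s | lam / 2 ≤ ‖f' s‖ₑ}) := by ring
    _ ≤ 2 * (C ^ 2 * eLpNorm f 1 μ + eLpNorm f 1 μ) := by
        exact mul_le_mul_right
          (add_le_add (hF.mul_measure_lt_iSup_enorm_ergodicAverage_le hf _) markov) _
    _ = 2 * (C ^ 2 + 1) * eLpNorm f 1 μ := by ring

end WeakType

section AveragesConverge

variable {G S E : Type*} [VAdd G S] [MeasurableSpace S] [NormedAddCommGroup E] [NormedSpace ℝ E]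
  {F : ℕ → Finset G} {μ : Measure S}

/-- The integrable function `f` satisfies the conclusion of the ergodic theorem along `F`: its
averages converge to its conditional expectation almost everywhere and in `L¹`. -/
structure AveragesConverge (F : ℕ → Finset G) (μ : Measure S) (f : S → E) : Prop where
  integrable : Integrable f μ
  ae_tendsto : ∀ᵐ s ∂μ, Tendsto (fun n => condExpError (F n) μ f s) atTop (𝓝 0)
  tendsto_eLpNorm : Tendsto (fun n => eLpNorm (condExpError (F n) μ f) 1 μ) atTop (𝓝 0)

namespace AveragesConverge

variable (F μ) in
theorem zero : AveragesConverge F μ (0 : S → E) where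
  integrable := integrable_zero S E μ
  ae_tendsto := by simp [condExpError_zero]
  tendsto_eLpNorm := by simp [condExpError_zero]

variable [CompleteSpace E]

theorem clm_comp {E' : Type*} [NormedAddCommGroup E'] [NormedSpace ℝ E'] [CompleteSpace E']
    {f : S → E} (hf : AveragesConverge F μ f) (L : E →L[ℝ] E') : AveragesConverge F μ (L ∘ f) := by
  have herror (n : ℕ) := condExpError_clm_comp (F n) L hf.integrable
  refine ⟨L.integrable_comp hf.integrable, ?_, ?_⟩
  · filter_upwards [ae_all_iff.2 herror, hf.ae_tendsto] with s hs hlim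
    exact ((L.continuous.tendsto' 0 0 (map_zero L)).comp hlim).congr fun n => (hs n).symm
  · have hbound (n : ℕ) : eLpNorm (condExpError (F n) μ (L ∘ f)) 1 μ ≤
        ‖L‖₊ * eLpNorm (condExpError (F n) μ f) 1 μ := by
      rw [eLpNorm_congr_ae (herror n)]
      exact eLpNorm_le_nnreal_smul_eLpNorm_of_ae_le_mul (.of_forall fun s => L.le_opNNNorm _) 1
    have hlim := ENNReal.Tendsto.const_mul hf.tendsto_eLpNorm
      (.inr (ENNReal.coe_ne_top (r := ‖L‖₊)))
    rw [mul_zero] at hlim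
    exact tendsto_nhds_bot_mono' hlim hbound

variable [MeasurableConstVAdd G S] [VAddInvariantMeasure G S μ]

theorem congr {f g : S → E} (hf : AveragesConverge F μ f) (hfg : f =ᵐ[μ] g) :
    AveragesConverge F μ g := by
  have herror (n : ℕ) := condExpError_congr_ae (F n) hfg
  refine ⟨hf.integrable.congr hfg, ?_, ?_⟩
  · filter_upwards [ae_all_iff.2 herror, hf.ae_tendsto] with s hs hlim
    exact hlim.congr hs
  · exact hf.tendsto_eLpNorm.congr fun n => eLpNorm_congr_ae (herror n)

theorem add {f g : S → E} (hf : AveragesConverge F μ f) (hg : AveragesConverge F μ g) :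
    AveragesConverge F μ (f + g) := by
  have herror (n : ℕ) := condExpError_add (F n) hf.integrable hg.integrable
  refine ⟨hf.integrable.add hg.integrable, ?_, ?_⟩
  · filter_upwards [ae_all_iff.2 herror, hf.ae_tendsto, hg.ae_tendsto] with s hs hfs hgs
    simpa [hs] using hfs.add hgs
  · have hbound (n : ℕ) : eLpNorm (condExpError (F n) μ (f + g)) 1 μ ≤
        eLpNorm (condExpError (F n) μ f) 1 μ + eLpNorm (condExpError (F n) μ g) 1 μ := by
      rw [eLpNorm_congr_ae (herror n)]
      exact eLpNorm_add_le (aestronglyMeasurable_condExpError _ hf.integrable.1)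
        (aestronglyMeasurable_condExpError _ hg.integrable.1) le_rfl
    have hlim := hf.tendsto_eLpNorm.add hg.tendsto_eLpNorm
    rw [add_zero] at hlim
    exact tendsto_nhds_bot_mono' hlim hbound

end AveragesConverge

end AveragesConverge

section Approximation

variable {G S E : Type*} [AddCommGroup G] [DecidableEq G] [AddAction G S] [MeasurableSpace S]
  [MeasurableConstVAdd G S] {μ : Measure S} [VAddInvariantMeasure G S μ] [NormedAddCommGroup E]
  [NormedSpace ℝ E] [CompleteSpace E] {F : ℕ → Finset G} {C : ℕ}

theorem AveragesConverge.of_approx (hF : IsTempelman F C) {f : S → E} (hf : Integrable f μ)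
    (happrox : ∀ ε : ℝ≥0∞, ε ≠ 0 → ∃ g : S → E, AveragesConverge F μ g ∧
      eLpNorm (f - g) 1 μ ≤ ε) : AveragesConverge F μ f := by
  refine ⟨hf, ae_tendsto_zero_of_weakType_approx fun ε hε => ?_,
    tendsto_eLpNorm_zero_of_approx le_rfl
      (fun n => aestronglyMeasurable_condExpError (F n) hf.1) fun ε hε => ?_⟩
  · set K : ℝ≥0∞ := 2 * (C ^ 2 + 1)
    have hK0 : K ≠ 0 := by simp [K]
    have hKtop : K ≠ ∞ := by finiteness
    obtain ⟨g, hg, hfg⟩ := happrox (ε / K) (ENNReal.div_pos hε hKtop).ne'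
    refine ⟨fun n => condExpError (F n) μ g, hg.ae_tendsto, fun lam => ?_⟩
    have hae : {s | lam < ⨆ n, ‖condExpError (F n) μ f s - condExpError (F n) μ g s‖ₑ} =ᵐ[μ]
        {s | lam < ⨆ n, ‖condExpError (F n) μ (f - g) s‖ₑ} := by
      filter_upwards [ae_all_iff.2 fun n => condExpError_sub (F n) hf hg.integrable] with s hs
      exact congrArg (lam < ·) (iSup_congr fun n => by rw [hs n, Pi.sub_apply])
    calc lam * μ {s | lam < ⨆ n, ‖condExpError (F n) μ f s - condExpError (F n) μ g s‖ₑ}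
        = lam * μ {s | lam < ⨆ n, ‖condExpError (F n) μ (f - g) s‖ₑ} := by rw [measure_congr hae]
      _ ≤ K * eLpNorm (f - g) 1 μ :=
          hF.mul_measure_lt_iSup_enorm_condExpError_le (hf.sub hg.integrable).1 lam
      _ ≤ K * (ε / K) := by gcongr
      _ = ε := ENNReal.mul_div_cancel hK0 hKtop
  · obtain ⟨g, hg, hfg⟩ := happrox (ε / 2) (ENNReal.half_pos hε).ne'
    refine ⟨fun n => condExpError (F n) μ g,
      fun n => aestronglyMeasurable_condExpError (F n) hg.integrable.1, hg.tendsto_eLpNorm,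
      fun n => ?_⟩
    calc eLpNorm (condExpError (F n) μ f - condExpError (F n) μ g) 1 μ
        = eLpNorm (condExpError (F n) μ (f - g)) 1 μ :=
          eLpNorm_congr_ae (condExpError_sub (F n) hf hg.integrable).symm
      _ ≤ 2 * eLpNorm (f - g) 1 μ := eLpNorm_one_condExpError_le (F n) (hf.sub hg.integrable).1
      _ ≤ 2 * (ε / 2) := by gcongr
      _ = ε := ENNReal.mul_div_cancel two_ne_zero ENNReal.ofNat_ne_top

end Approximation

section InvariantFunctions

variable {G S E : Type*} [AddGroup G] [Countable G] [MeasurableSpace G]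
  [MeasurableSingletonClass G] [AddAction G S] [MeasurableSpace S] [MeasurableConstVAdd G S]
  {μ : Measure S} [IsFiniteMeasure μ] [VAddInvariantMeasure G S μ] [NormedAddCommGroup E]
  [NormedSpace ℝ E] [CompleteSpace E] {F : ℕ → Finset G}

theorem AveragesConverge.of_invariant
    (hF : IsAddFoelner G Measure.count atTop fun n => (F n : Set G)) {f : S → E}
    (hf : Integrable f μ) (hinv : ∀ t : G, f ∘ (t +ᵥ ·) =ᵐ[μ] f) : AveragesConverge F μ f := by
  have hcond : μ[f|invariantSigmaAlgebra G S] =ᵐ[μ] f :=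
    condExp_of_aestronglyMeasurable' (invariantSigmaAlgebra_le G S)
      (aestronglyMeasurable_invariantSigmaAlgebra hf.1 hinv) hf
  have hne : ∀ᶠ n in atTop, (F n).Nonempty := by
    filter_upwards [hF.eventually_meas_ne_zero] with n hn
    simpa [Finset.nonempty_iff_ne_empty] using hn
  have herror : ∀ᵐ s ∂μ, ∀ n, (F n).Nonempty → condExpError (F n) μ f s = 0 := by
    filter_upwards [ae_all_iff.2 hinv, hcond] with s hs hcs n hn
    rw [condExpError, Pi.sub_apply, ergodicAverage_apply_of_invariant hn hs, hcs, sub_self]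
  refine ⟨hf, ?_, tendsto_nhds_of_eventually_eq ?_⟩
  · filter_upwards [herror] with s hs
    exact tendsto_nhds_of_eventually_eq (hne.mono hs)
  · filter_upwards [hne] with n hn
    have hzero : condExpError (F n) μ f =ᵐ[μ] 0 := herror.mono fun s hs => hs n hn
    rw [eLpNorm_congr_ae hzero, eLpNorm_zero]

end InvariantFunctions

section Coboundaries

theorem enorm_sum_sub_sum_le_mul_card_symmDiff {ι E : Type*} [DecidableEq ι]
    [NormedAddCommGroup E] (A B : Finset ι) {a : ι → E} {M : ℝ≥0∞} (ha : ∀ i, ‖a i‖ₑ ≤ M) :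
    ‖∑ i ∈ A, a i - ∑ i ∈ B, a i‖ₑ ≤ M * #(A ∆ B) := by
  have enorm_sum_le_card (s : Finset ι) : ‖∑ i ∈ s, a i‖ₑ ≤ #s * M :=
    (enorm_sum_le s a).trans (by simpa using Finset.sum_le_card_nsmul s _ M fun i _ => ha i)
  have card_symmDiff : #(A ∆ B) = #(A \ B) + #(B \ A) :=
    Finset.card_union_of_disjoint disjoint_sdiff_sdiff
  calc ‖∑ i ∈ A, a i - ∑ i ∈ B, a i‖ₑ
      = ‖∑ i ∈ A \ B, a i - ∑ i ∈ B \ A, a i‖ₑ := by rw [Finset.sum_sdiff_sub_sum_sdiff]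
    _ ≤ #(A \ B) * M + #(B \ A) * M :=
        enorm_sub_le.trans (add_le_add (enorm_sum_le_card _) (enorm_sum_le_card _))
    _ = M * #(A ∆ B) := by rw [card_symmDiff, Nat.cast_add]; ring

section VAdd

variable {G S E : Type*} [VAdd G S] [NormedAddCommGroup E]

/-- The coboundary of `h` in the direction `t`: the difference between the translate of `h` by `t`
and `h` itself. -/
def coboundary (t : G) (h : S → E) : S → E :=
  h ∘ (t +ᵥ ·) - h

theorem coboundary_sub (t : G) (g h : S → E) :
    coboundary t (g - h) = coboundary t g - coboundary t h :=
  sub_sub_sub_comm (g ∘ (t +ᵥ ·)) (h ∘ (t +ᵥ ·)) g h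

variable [MeasurableSpace S] [MeasurableConstVAdd G S] {μ : Measure S} [VAddInvariantMeasure G S μ]
  {h : S → E}

theorem integrable_coboundary (t : G) (hh : Integrable h μ) : Integrable (coboundary t h) μ :=
  ((measurePreserving_vadd t μ).integrable_comp_of_integrable hh).sub hh

theorem eLpNorm_coboundary_le (t : G) (hh : AEStronglyMeasurable h μ) {p : ℝ≥0∞} (hp : 1 ≤ p) :
    eLpNorm (coboundary t h) p μ ≤ 2 * eLpNorm h p μ := by
  have hpres := measurePreserving_vadd t μ
  calc eLpNorm (coboundary t h) p μ
      ≤ eLpNorm (h ∘ (t +ᵥ ·)) p μ + eLpNorm h p μ :=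
        eLpNorm_sub_le (hh.comp_measurePreserving hpres) hh hp
    _ = 2 * eLpNorm h p μ := by rw [eLpNorm_comp_measurePreserving hh hpres, two_mul]

end VAdd

variable {G S E : Type*} [NormedAddCommGroup E] [NormedSpace ℝ E]

theorem condExp_coboundary [AddGroup G] [AddAction G S] [MeasurableSpace S]
    [MeasurableConstVAdd G S] {μ : Measure S} [IsFiniteMeasure μ] [VAddInvariantMeasure G S μ]
    [CompleteSpace E] {h : S → E} (hh : Integrable h μ) (t : G) :
    μ[coboundary t h|invariantSigmaAlgebra G S] =ᵐ[μ] 0 := by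
  have hcomp := (measurePreserving_vadd t μ).integrable_comp_of_integrable hh
  filter_upwards [condExp_sub hcomp hh (invariantSigmaAlgebra G S), condExp_comp_vadd hh t]
    with s hsub hs
  rw [coboundary, hsub, Pi.sub_apply, hs, sub_self, Pi.zero_apply]

variable [AddCommGroup G] [MeasurableSpace G] [MeasurableSingletonClass G] [AddAction G S]

theorem enorm_ergodicAverage_coboundary_le (F : Finset G) (t : G) {h : S → E} {M : ℝ≥0∞}
    (hM : ∀ s, ‖h s‖ₑ ≤ M) (s : S) :
    ‖ergodicAverage F (coboundary t h) s‖ₑ ≤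
      M * (Measure.count ((t +ᵥ (F : Set G)) ∆ F) / Measure.count (F : Set G)) := by
  classical
  have sum_coboundary : ∑ v ∈ F, coboundary t h (v +ᵥ s) =
      ∑ v ∈ t +ᵥ F, h (v +ᵥ s) - ∑ v ∈ F, h (v +ᵥ s) := by
    rw [Finset.vadd_finset_def, Finset.sum_image (AddAction.injective t).injOn]
    simp [coboundary, vadd_vadd]
  rw [enorm_ergodicAverage, sum_coboundary, ← Finset.coe_vadd_finset, ← Finset.coe_symmDiff,
    Measure.count_apply_finset, Measure.count_apply_finset, ← mul_div_assoc]
  gcongr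
  exact enorm_sum_sub_sum_le_mul_card_symmDiff _ F fun v => hM (v +ᵥ s)

variable [MeasurableSpace S] [MeasurableConstVAdd G S] {μ : Measure S} [IsFiniteMeasure μ]
  [VAddInvariantMeasure G S μ] [CompleteSpace E] {F : ℕ → Finset G} {h : S → E}

theorem AveragesConverge.of_bounded_coboundary
    (hF : IsAddFoelner G Measure.count atTop fun n => (F n : Set G)) (hh : Integrable h μ)
    {M : ℝ≥0∞} (hMtop : M ≠ ∞) (hM : ∀ s, ‖h s‖ₑ ≤ M) (t : G) :
    AveragesConverge F μ (coboundary t h) := by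
  set c : ℕ → ℝ≥0∞ := fun n =>
    M * (Measure.count ((t +ᵥ (F n : Set G)) ∆ F n) / Measure.count (F n : Set G))
  have hc : Tendsto c atTop (𝓝 0) := by
    have hlim := ENNReal.Tendsto.const_mul (hF.tendsto_meas_vadd_symmDiff t) (.inr hMtop)
    rwa [mul_zero] at hlim
  have herror : ∀ᵐ s ∂μ, ∀ n, ‖condExpError (F n) μ (coboundary t h) s‖ₑ ≤ c n := by
    filter_upwards [condExp_coboundary hh t] with s hs n
    rw [condExpError, Pi.sub_apply, hs, Pi.zero_apply, sub_zero]
    exact enorm_ergodicAverage_coboundary_le (F n) t hM s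
  refine ⟨integrable_coboundary t hh, ?_, ?_⟩
  · filter_upwards [herror] with s hs
    exact tendsto_zero_iff_enorm_tendsto_zero.2 (tendsto_nhds_bot_mono' hc hs)
  · have hbound (n : ℕ) : eLpNorm (condExpError (F n) μ (coboundary t h)) 1 μ ≤
        c n * μ Set.univ := by
      simpa using eLpNorm_le_of_ae_enorm_bound (p := 1) (herror.mono fun s hs => hs n)
    have hlim := ENNReal.Tendsto.mul_const hc (.inr (measure_ne_top μ Set.univ))
    rw [zero_mul] at hlim
    exact tendsto_nhds_bot_mono' hlim hbound

theorem AveragesConverge.of_coboundary [DecidableEq G] {C : ℕ} (hF : IsTempelman F C)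
    (hFoelner : IsAddFoelner G Measure.count atTop fun n => (F n : Set G)) (hh : Integrable h μ)
    (t : G) : AveragesConverge F μ (coboundary t h) := by
  refine .of_approx hF (integrable_coboundary t hh) fun ε hε => ?_
  obtain ⟨g, hhg, hg⟩ := (memLp_one_iff_integrable.2 hh).exists_simpleFunc_eLpNorm_sub_lt
    ENNReal.one_ne_top (ENNReal.half_pos hε).ne'
  obtain ⟨M, hM⟩ := g.exists_forall_norm_le
  have hM' (s : S) : ‖g s‖ₑ ≤ ENNReal.ofReal M := by
    rw [← ofReal_norm]
    exact ENNReal.ofReal_le_ofReal (hM s)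
  refine ⟨coboundary t g, .of_bounded_coboundary hFoelner (memLp_one_iff_integrable.1 hg)
    ENNReal.ofReal_ne_top hM' t, ?_⟩
  calc eLpNorm (coboundary t h - coboundary t g) 1 μ
      ≤ 2 * eLpNorm (h - ⇑g) 1 μ := by
        rw [← coboundary_sub]
        exact eLpNorm_coboundary_le t (hh.1.sub hg.1) le_rfl
    _ ≤ 2 * (ε / 2) := by gcongr
    _ = ε := ENNReal.mul_div_cancel two_ne_zero ENNReal.ofNat_ne_top

end Coboundaries

section IntBox

variable (ι : Type*) [Fintype ι] [DecidableEq ι]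

/-- The lattice points of the cube `(-T, T]^ι`. -/
noncomputable def intBox (T : ℕ) : Finset (ι → ℤ) :=
  Fintype.piFinset fun _ => Finset.Ioc (-(T : ℤ)) T

variable {ι} in
theorem mem_intBox {T : ℕ} {x : ι → ℤ} : x ∈ intBox ι T ↔ ∀ i, -(T : ℤ) < x i ∧ x i ≤ T := by
  simp [intBox]

theorem card_intBox (T : ℕ) : #(intBox ι T) = (2 * T) ^ Fintype.card ι := by
  have hside : ((T : ℤ) - -T).toNat = 2 * T := by lia
  simp only [intBox, Fintype.card_piFinset, Int.card_Ioc, hside, Finset.prod_const,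
    Finset.card_univ]

theorem card_intBox_pos {T : ℕ} (hT : T ≠ 0) : 0 < #(intBox ι T) := by
  rw [card_intBox]
  positivity

theorem monotone_intBox : Monotone (intBox ι) := fun T T' hT x hx =>
  mem_intBox.2 fun i => by have := mem_intBox.1 hx i; lia

theorem intBox_sub_intBox_subset (T : ℕ) : intBox ι T - intBox ι T ⊆ intBox ι (2 * T) := by
  intro z hz
  obtain ⟨x, hx, y, hy, rfl⟩ := Finset.mem_sub.1 hz
  refine mem_intBox.2 fun i => ?_
  have hxi := mem_intBox.1 hx i
  have hyi := mem_intBox.1 hy i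
  rw [Pi.sub_apply]
  lia

theorem isTempelman_intBox : IsTempelman (intBox ι) (2 ^ Fintype.card ι) where
  monotone := monotone_intBox ι
  card_sub_self_le T := calc
    #(intBox ι T - intBox ι T) ≤ #(intBox ι (2 * T)) :=
      Finset.card_le_card (intBox_sub_intBox_subset ι T)
    _ = 2 ^ Fintype.card ι * #(intBox ι T) := by rw [card_intBox, card_intBox, ← mul_pow]

variable {ι} in
theorem vadd_intBox_subset {t : ι → ℤ} {m : ℕ} (ht : ∀ i, |t i| ≤ m) (T : ℕ) :
    t +ᵥ intBox ι T ⊆ intBox ι (T + m) := by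
  intro z hz
  obtain ⟨x, hx, rfl⟩ := Finset.mem_vadd_finset.1 hz
  refine mem_intBox.2 fun i => ?_
  have hxi := mem_intBox.1 hx i
  have hti := abs_le.1 (ht i)
  rw [vadd_eq_add, Pi.add_apply]
  lia

theorem card_symmDiff_add_card_add_card_le {α : Type*} [DecidableEq α] {A B D : Finset α}
    (hA : A ⊆ D) (hB : B ⊆ D) : #(A ∆ B) + #A + #B ≤ 2 * #D := by
  have hsymm : #(A ∆ B) = #(A \ B) + #(B \ A) :=
    Finset.card_union_of_disjoint disjoint_sdiff_sdiff
  have hAB := Finset.card_le_card (Finset.union_subset hA hB)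
  have h₁ := Finset.card_union_add_card_inter A B
  have h₂ := Finset.card_sdiff_add_card_inter A B
  have h₃ := Finset.card_sdiff_add_card_inter B A
  rw [Finset.inter_comm] at h₃
  lia

variable {ι} in
theorem card_vadd_symmDiff_intBox_div_le {t : ι → ℤ} {m : ℕ} (ht : ∀ i, |t i| ≤ m) {T : ℕ}
    (hT : T ≠ 0) : (#((t +ᵥ intBox ι T) ∆ intBox ι T) / #(intBox ι T) : ℝ) ≤
      2 * ((1 + m / T : ℝ) ^ Fintype.card ι - 1) := by
  have hcard : (#((t +ᵥ intBox ι T) ∆ intBox ι T) : ℝ) + #(intBox ι T) + #(intBox ι T) ≤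
      2 * #(intBox ι (T + m)) := by
    have := card_symmDiff_add_card_add_card_le (vadd_intBox_subset ht T)
      (monotone_intBox ι (Nat.le_add_right T m))
    rw [Finset.card_vadd_finset] at this
    exact_mod_cast this
  have hratio : (#(intBox ι (T + m)) : ℝ) = (1 + m / T : ℝ) ^ Fintype.card ι * #(intBox ι T) := by
    rw [card_intBox, card_intBox]
    push_cast
    rw [← mul_pow]
    field_simp
  rw [div_le_iff₀ (by exact_mod_cast card_intBox_pos ι hT)]
  rw [hratio] at hcard
  linarith

theorem isAddFoelner_intBox :
    IsAddFoelner (ι → ℤ) Measure.count atTop fun T => (intBox ι T : Set (ι → ℤ)) where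
  eventually_measurableSet := .of_forall fun T => (intBox ι T).measurableSet
  eventually_meas_ne_zero := by
    filter_upwards [eventually_ne_atTop 0] with T hT
    rw [Measure.count_apply_finset]
    exact_mod_cast (card_intBox_pos ι hT).ne'
  eventually_meas_ne_top := .of_forall fun T => by simp
  tendsto_meas_vadd_symmDiff t := by
    obtain ⟨m, hm⟩ : ∃ m : ℕ, ∀ i, |t i| ≤ m :=
      ⟨Finset.univ.sup fun i => (t i).natAbs, fun i => by
        rw [Int.abs_eq_natAbs]
        exact_mod_cast Finset.le_sup (f := fun i => (t i).natAbs) (Finset.mem_univ i)⟩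
    have hlim : Tendsto (fun T : ℕ => ENNReal.ofReal (2 * ((1 + m / T : ℝ) ^ Fintype.card ι - 1)))
        atTop (𝓝 0) := by
      rw [← ENNReal.ofReal_zero]
      refine ENNReal.tendsto_ofReal ?_
      simpa using ((((tendsto_const_div_atTop_nhds_zero_nat (m : ℝ)).const_add 1).pow
        (Fintype.card ι)).sub_const 1).const_mul 2
    refine tendsto_of_tendsto_of_tendsto_of_le_of_le' tendsto_const_nhds hlim
      (.of_forall fun _ => zero_le) ?_
    filter_upwards [eventually_ne_atTop 0] with T hT
    have hpos : (0 : ℝ) < #(intBox ι T) := by exact_mod_cast card_intBox_pos ι hT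
    rw [← Finset.coe_vadd_finset, ← Finset.coe_symmDiff, Measure.count_apply_finset,
      Measure.count_apply_finset, ← ENNReal.ofReal_natCast, ← ENNReal.ofReal_natCast,
      ← ENNReal.ofReal_div_of_pos hpos]
    exact ENNReal.ofReal_le_ofReal (card_vadd_symmDiff_intBox_div_le hm hT)

theorem ergodicAverage_intBox {S E : Type*} [VAdd (ι → ℤ) S] [NormedAddCommGroup E]
    [NormedSpace ℝ E] (T : ℕ) (f : S → E) (s : S) :
    ergodicAverage (intBox ι T) f s =
      ((2 * T : ℝ) ^ Fintype.card ι)⁻¹ • ∑ t ∈ intBox ι T, f (t +ᵥ s) := by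
  rw [ergodicAverage, card_intBox, Nat.cast_pow, Nat.cast_mul, Nat.cast_ofNat]

end IntBox

section ErgodicTheorem

variable {G S E : Type*} [AddCommGroup G] [DecidableEq G] [AddAction G S] [MeasurableSpace S]
  [MeasurableConstVAdd G S] {μ : Measure S} [IsFiniteMeasure μ] [VAddInvariantMeasure G S μ]
  [NormedAddCommGroup E] {F : ℕ → Finset G} {C : ℕ}

theorem isClosed_averagesConverge [NormedSpace ℝ E] [CompleteSpace E] (hF : IsTempelman F C)
    (p : ℝ≥0∞) [hp : Fact (1 ≤ p)] : IsClosed {f : Lp E p μ | AveragesConverge F μ f} := by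
  refine isClosed_of_closure_subset fun f hf =>
    .of_approx hF ((Lp.memLp f).integrable hp.out) fun ε hε => ?_
  set K : ℝ≥0∞ := μ Set.univ ^ (1 / ENNReal.toReal 1 - 1 / p.toReal)
  have hK : K ≠ ∞ := by
    refine ENNReal.rpow_ne_top_of_nonneg ?_ (measure_ne_top μ _)
    have := ENNReal.toReal_mono ENNReal.one_ne_top (ENNReal.inv_le_one.2 hp.out)
    simpa using this
  obtain ⟨g, hg, hfg⟩ := EMetric.mem_closure_iff.1 hf (ε / K) (ENNReal.div_pos hε hK)
  refine ⟨g, hg, ?_⟩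
  calc eLpNorm (f - g : S → E) 1 μ ≤ eLpNorm (f - g : S → E) p μ * K :=
        eLpNorm_le_eLpNorm_mul_rpow_measure_univ hp.out
          ((Lp.aestronglyMeasurable f).sub (Lp.aestronglyMeasurable g))
    _ ≤ ε / K * K := by
        rw [← Lp.edist_def]
        gcongr
    _ ≤ ε := by rw [mul_comm]; exact ENNReal.mul_div_le

variable (E μ F) in
/-- The square-integrable functions whose averages along `F` converge. -/
def convergentSubmodule [NormedSpace ℝ E] [CompleteSpace E] : Submodule ℝ (Lp E 2 μ) where
  carrier := {f | AveragesConverge F μ f}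
  add_mem' {f g} hf hg := (hf.add hg).congr (Lp.coeFn_add f g).symm
  zero_mem' := (AveragesConverge.zero F μ).congr (Lp.coeFn_zero E 2 μ).symm
  smul_mem' c f hf := (hf.clm_comp (c • ContinuousLinearMap.id ℝ E)).congr (Lp.coeFn_smul c f).symm

variable [MeasurableSpace G] [MeasurableSingletonClass G] [Countable G]

theorem convergentSubmodule_eq_top [InnerProductSpace ℝ E] [CompleteSpace E] (hF : IsTempelman F C)
    (hFoelner : IsAddFoelner G Measure.count atTop fun n => (F n : Set G)) :
    convergentSubmodule E μ F = ⊤ := by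
  have : CompleteSpace (convergentSubmodule E μ F) :=
    (isClosed_averagesConverge hF 2).completeSpace_coe
  rw [← Submodule.orthogonal_eq_bot_iff, Submodule.eq_bot_iff]
  intro g hg
  have hgint : Integrable g μ := (Lp.memLp g).integrable one_le_two
  have translate_eq (t : G) : Lp.compMeasurePreserving _ (measurePreserving_vadd t μ) g = g := by
    set U := Lp.compMeasurePreserving _ (measurePreserving_vadd t μ) g
    have hmem : U - g ∈ convergentSubmodule E μ F :=
      (AveragesConverge.of_coboundary hF hFoelner hgint t).congr <|
        ((Lp.coeFn_compMeasurePreserving g _).sub .rfl).symm.trans (Lp.coeFn_sub U g).symm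
    have hinner : inner ℝ U g = ‖g‖ ^ 2 := by
      rw [← real_inner_self_eq_norm_sq, ← sub_eq_zero, ← inner_sub_left]
      exact (Submodule.mem_orthogonal _ g).1 hg _ hmem
    exact eq_of_norm_le_re_inner_eq_norm_sq (𝕜 := ℝ)
      (Lp.norm_compMeasurePreserving g _).le hinner
  have hmem : g ∈ convergentSubmodule E μ F :=
    AveragesConverge.of_invariant hFoelner hgint fun t => by
      simpa [translate_eq t] using
        (Lp.coeFn_compMeasurePreserving g (measurePreserving_vadd t μ)).symm
  exact inner_self_eq_zero.1 ((Submodule.mem_orthogonal _ g).1 hg _ hmem)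

theorem AveragesConverge.of_memLp_two [InnerProductSpace ℝ E] [CompleteSpace E]
    (hF : IsTempelman F C)
    (hFoelner : IsAddFoelner G Measure.count atTop fun n => (F n : Set G)) {f : S → E}
    (hf : MemLp f 2 μ) : AveragesConverge F μ f := by
  have hmem : hf.toLp f ∈ convergentSubmodule E μ F := by
    rw [convergentSubmodule_eq_top hF hFoelner]
    exact Submodule.mem_top
  exact AveragesConverge.congr hmem hf.coeFn_toLp

theorem AveragesConverge.of_integrable [NormedSpace ℝ E] [CompleteSpace E] (hF : IsTempelman F C)
    (hFoelner : IsAddFoelner G Measure.count atTop fun n => (F n : Set G)) {f : S → E}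
    (hf : Integrable f μ) : AveragesConverge F μ f := by
  refine Integrable.induction (AveragesConverge F μ) (fun c A hA _ => ?_)
    (fun _ _ _ _ _ hf hg => hf.add hg) (isClosed_averagesConverge hF 1)
    (fun _ _ hfg _ hf => hf.congr hfg) hf
  have hind : AveragesConverge F μ (A.indicator fun _ => (1 : ℝ)) :=
    of_memLp_two hF hFoelner (memLp_indicator_const 2 hA 1 (.inr (measure_ne_top μ A)))
  have hcomp : ContinuousLinearMap.toSpanSingleton ℝ c ∘ A.indicator (fun _ => (1 : ℝ)) =
      A.indicator fun _ => c := by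
    ext s
    by_cases hs : s ∈ A <;> simp [hs]
  exact hcomp ▸ hind.clm_comp _

theorem stmt8_general [NormedSpace ℝ E] [CompleteSpace E] (hF : IsTempelman F C)
    (hFoelner : IsAddFoelner G Measure.count atTop fun n => (F n : Set G)) {f : S → E}
    (hf : Integrable f μ) :
    (∀ᵐ s ∂μ, Tendsto (fun n => ergodicAverage (F n) f s) atTop
      (𝓝 (μ[f|invariantSigmaAlgebra G S] s))) ∧
    Tendsto (fun n => ∫ s, ‖ergodicAverage (F n) f s - μ[f|invariantSigmaAlgebra G S] s‖ ∂μ)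
      atTop (𝓝 0) := by
  have hconv := AveragesConverge.of_integrable hF hFoelner hf
  refine ⟨hconv.ae_tendsto.mono fun s hs => tendsto_sub_nhds_zero_iff.1 hs, ?_⟩
  have hlim := (ENNReal.tendsto_toReal ENNReal.zero_ne_top).comp hconv.tendsto_eLpNorm
  refine hlim.congr fun n => ?_
  rw [Function.comp_apply, eLpNorm_one_eq_lintegral_enorm,
    ← integral_norm_eq_lintegral_enorm (aestronglyMeasurable_condExpError (F n) hf.1)]
  rfl

end ErgodicTheorem

/-- Multiparameter Birkhoff theorem, discrete case: for a measure-preserving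
`ℤ^d`-action `{φ_t}` on a probability space `(S,μ)` and `f₀ ∈ L¹(μ)`, the averages
`A_T f = (2T)^{-d} Σ_{t ∈ (−T,T]^d ∩ ℤ^d} f₀ ∘ φ_t` converge `μ`-a.e. and in `L¹` to the
conditional expectation of `f₀` given the σ-algebra `𝓘` of invariant measurable sets. -/
theorem stmt8 {S : Type*} [MeasurableSpace S]
    (μ : Measure S) [IsProbabilityMeasure μ] (d : ℕ)
    (φ : (Fin d → ℤ) → S → S)
    (hφmeas : ∀ t, Measurable (φ t))
    (hid : ∀ s, φ 0 s = s)
    (hcomp : ∀ u v s, φ (u + v) s = φ u (φ v s))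
    (hpres : ∀ t, ∀ A : Set S, MeasurableSet A → μ (φ t ⁻¹' A) = μ A) :
    ∀ f₀ : S → ℝ, Integrable f₀ μ →
      (∀ᵐ s ∂μ, Tendsto (fun T : ℕ =>
          ((2 * T : ℝ) ^ d)⁻¹ *
            ∑ t ∈ Fintype.piFinset fun _ : Fin d => Finset.Ioc (-(T : ℤ)) (T : ℤ),
              f₀ (φ t s))
        atTop
        (nhds ((μ[f₀|MeasurableSpace.generateFrom
          {A : Set S | MeasurableSet A ∧ ∀ t, φ t ⁻¹' A = A}]) s))) ∧
      Tendsto (fun T : ℕ =>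
          ∫ s, |(((2 * T : ℝ) ^ d)⁻¹ *
            ∑ t ∈ Fintype.piFinset fun _ : Fin d => Finset.Ioc (-(T : ℤ)) (T : ℤ),
              f₀ (φ t s)) -
            (μ[f₀|MeasurableSpace.generateFrom
              {A : Set S | MeasurableSet A ∧ ∀ t, φ t ⁻¹' A = A}]) s| ∂μ)
        atTop (nhds 0) := by
  intro f₀ hf₀
  let : AddAction (Fin d → ℤ) S := { vadd := φ, zero_vadd := hid, add_vadd := hcomp }
  have : MeasurableConstVAdd (Fin d → ℤ) S := ⟨hφmeas⟩
  have : VAddInvariantMeasure (Fin d → ℤ) S μ := ⟨fun t A hA => hpres t A hA⟩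
  have generateFrom_eq : MeasurableSpace.generateFrom
      {A : Set S | MeasurableSet A ∧ ∀ t, φ t ⁻¹' A = A} = invariantSigmaAlgebra (Fin d → ℤ) S :=
    @MeasurableSpace.generateFrom_measurableSet S (invariantSigmaAlgebra (Fin d → ℤ) S)
  have main := stmt8_general (isTempelman_intBox (Fin d)) (isAddFoelner_intBox (Fin d)) hf₀
  simp only [ergodicAverage_intBox, Fintype.card_fin] at main
  rwa [generateFrom_eq]
end
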